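/- arXiv:1712.06254 — 4 statements merged into one kernel-verified Lean document; each statement's English description precedes it below -/
import Mathlib

section
/- Let 0 < a < b and x ∈ ℝ⁴ be such that B̄_x(b) ⊆ Ω and H_φ(x,t) > 0 for all t ∈ (a,b). Then for every r ∈ (a,b), the function t ↦ N_φ(x,t) is differentiable at r with ∂_r N_φ(x,r) = (2/(r·H_φ(x,r))) ∫ −φ'(|y−x|/r) |y−x|⁻¹ |∂_{η_x}u(y) − N_φ(x,r)·u(y)|² dy ≥ 0. In particular, N_φ(x,·) is nondecreasing on (a,b). -/
open Metric MeasureTheory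
open scoped RealInnerProductSpace

noncomputable section

abbrev E4 := EuclideanSpace ℝ (Fin 4)

variable {E : Type*} [NormedAddCommGroup E] [InnerProductSpace ℝ E] [FiniteDimensional ℝ E]

/-- `u` is smooth and harmonic (the Laplacian, i.e. the sum of the pure second
derivatives in the coordinate directions, vanishes) on `Ω`. -/
def IsHarmonicOn (u : E4 → E) (Ω : Set E4) : Prop :=
  ContDiffOn ℝ (⊤ : ℕ∞) u Ω ∧
  ∀ x ∈ Ω, ∑ i : Fin 4,
    iteratedFDeriv ℝ 2 u x ![EuclideanSpace.single i (1:ℝ), EuclideanSpace.single i 1] = 0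

/-- `|∇u(y)|²`, the squared Frobenius norm of the derivative of `u` at `y`. -/
def gradSq (u : E4 → E) (y : E4) : ℝ :=
  ∑ i : Fin 4, ‖fderiv ℝ u y (EuclideanSpace.single i (1:ℝ))‖ ^ 2

/-- `D_φ(x,r) = ∫ |∇u(y)|² φ(|y−x|/r) dy`. -/
def Dphi (φ : ℝ → ℝ) (u : E4 → E) (x : E4) (r : ℝ) : ℝ :=
  ∫ y, gradSq u y * φ (‖y - x‖ / r)

/-- `H_φ(x,r) = −∫ |u(y)|² |y−x|⁻¹ φ'(|y−x|/r) dy`. -/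
def Hphi (φ : ℝ → ℝ) (u : E4 → E) (x : E4) (r : ℝ) : ℝ :=
  -∫ y, ‖u y‖ ^ 2 * ‖y - x‖⁻¹ * deriv φ (‖y - x‖ / r)

/-- `E_φ(x,r) = −∫ |∂_{ν_x}u(y)|² |y−x| φ'(|y−x|/r) dy`, where `ν_x(y) = (y−x)/|y−x|`. -/
def Ephi (φ : ℝ → ℝ) (u : E4 → E) (x : E4) (r : ℝ) : ℝ :=
  -∫ y, ‖fderiv ℝ u y (‖y - x‖⁻¹ • (y - x))‖ ^ 2 * ‖y - x‖ * deriv φ (‖y - x‖ / r)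

/-- The smoothed frequency `N_φ(x,r) = r D_φ(x,r) / H_φ(x,r)`. -/
def Nphi (φ : ℝ → ℝ) (u : E4 → E) (x : E4) (r : ℝ) : ℝ :=
  r * Dphi φ u x r / Hphi φ u x r


lemma aux_integrable {g : E4 → ℝ} (hg : Continuous g) {ψ : ℝ → ℝ} (hψ : Continuous ψ)
    (hψ0 : ∀ t, 1 ≤ t → ψ t = 0) (x : E4) {r : ℝ} (hr : 0 < r) :
    Integrable (fun y => g y * ψ (‖y - x‖ / r)) := by
  apply Continuous.integrable_of_hasCompactSupport
  · fun_prop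
  · apply HasCompactSupport.intro (isCompact_closedBall x r)
    intro y hy
    rw [hψ0, mul_zero]
    rw [mem_closedBall, dist_eq_norm] at hy
    rw [le_div_iff₀ hr]; linarith

lemma aux_change (g : E4 → ℝ) (ψ : ℝ → ℝ) (x : E4) {t : ℝ} (ht : 0 < t) :
    ∫ y, g y * ψ (‖y - x‖ / t) = t ^ 4 * ∫ z, g (x + t • z) * ψ ‖z‖ := by
  have h1 : ∫ y, g y * ψ (‖y - x‖ / t) = ∫ y, g (x + y) * ψ (‖y‖ / t) := by
    rw [← integral_add_left_eq_self _ x]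
    simp
  have h2 := Measure.integral_comp_smul (volume : Measure E4) (fun y => g (x + y) * ψ (‖y‖ / t)) t
  have h3 : ∀ z : E4, ‖t • z‖ / t = ‖z‖ := by
    intro z; rw [norm_smul, Real.norm_of_nonneg ht.le]; field_simp
  simp only [h3, finrank_euclideanSpace, Fintype.card_fin, smul_eq_mul] at h2
  rw [h1, h2, abs_of_pos (by positivity)]
  field_simp

lemma aux_scaling {f : E4 → ℝ} (hf : ContDiff ℝ 1 f) {ψ : ℝ → ℝ} (hψ : Continuous ψ)
    (hψ0 : ∀ t, 1 ≤ t → ψ t = 0) (x : E4) {r : ℝ} (hr : 0 < r) :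
    HasDerivAt (fun t => ∫ y, f y * ψ (‖y - x‖ / t))
      (4 / r * (∫ y, f y * ψ (‖y - x‖ / r)) +
        1 / r * ∫ y, fderiv ℝ f y (y - x) * ψ (‖y - x‖ / r)) r := by
  have hd : ∀ y, HasFDerivAt f (fderiv ℝ f y) y :=
    fun y => (hf.differentiable (by norm_num) y).hasFDerivAt
  have hfc : Continuous f := hf.continuous
  have hdc : Continuous (fderiv ℝ f) := hf.continuous_fderiv (by norm_num)
  have hset : ∀ g : E4 → ℝ, ∫ z in closedBall (0:E4) 1, g z * ψ ‖z‖ = ∫ z, g z * ψ ‖z‖ := by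
    intro g
    apply setIntegral_eq_integral_of_forall_compl_eq_zero
    intro z hz
    rw [mem_closedBall, dist_zero_right] at hz
    rw [hψ0 _ (by linarith), mul_zero]
  have key : HasDerivAt (fun t => ∫ z, f (x + t • z) * ψ ‖z‖)
      (∫ z, fderiv ℝ f (x + r • z) z * ψ ‖z‖) r := by
    simp_rw [← hset]
    have hcont : Continuous (fun p : ℝ × E4 => fderiv ℝ f (x + p.1 • p.2) p.2 * ψ ‖p.2‖) := by
      fun_prop
    obtain ⟨C, hC⟩ := ((isCompact_closedBall r 1).prod (isCompact_closedBall (0:E4) 1)).exists_bound_of_continuousOn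
      hcont.continuousOn
    refine (hasDerivAt_integral_of_dominated_loc_of_deriv_le (bound := fun _ => C)
      (F' := fun t z => fderiv ℝ f (x + t • z) z * ψ ‖z‖) (s := closedBall r 1)
      (closedBall_mem_nhds r one_pos) ?_ ?_ ?_ ?_ ?_ ?_).2
    · filter_upwards with t
      exact (by fun_prop : Continuous fun z => f (x + t • z) * ψ ‖z‖).aestronglyMeasurable
    · exact (by fun_prop : Continuous fun z => f (x + r • z) * ψ ‖z‖).continuousOn.integrableOn_compact
        (isCompact_closedBall _ _)
    · exact (by fun_prop : Continuous fun z => fderiv ℝ f (x + r • z) z * ψ ‖z‖).aestronglyMeasurable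
    · filter_upwards [ae_restrict_mem (isClosed_closedBall.measurableSet)] with z hz t ht
      exact hC (t, z) ⟨ht, hz⟩
    · exact (continuous_const : Continuous fun _ : E4 => C).continuousOn.integrableOn_compact
        (isCompact_closedBall _ _)
    · filter_upwards with z t ht
      have h1 : HasDerivAt (fun t : ℝ => x + t • z) z t := by
        simpa using ((hasDerivAt_id t).smul_const z).const_add x
      exact ((hd (x + t • z)).comp_hasDerivAt t h1).mul_const _
  have h2 := (hasDerivAt_pow 4 r).mul key
  have h3 : (fun t => ∫ y, f y * ψ (‖y - x‖ / t)) =ᶠ[nhds r]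
      (fun t => t ^ 4 * ∫ z, f (x + t • z) * ψ ‖z‖) := by
    filter_upwards [lt_mem_nhds hr] with t ht
    exact aux_change f ψ x ht
  refine (h2.congr_of_eventuallyEq h3).congr_deriv ?_
  rw [aux_change f ψ x hr, aux_change (fun y => fderiv ℝ f y (y - x)) ψ x hr]
  simp only [add_sub_cancel_left, map_smul, smul_eq_mul, mul_assoc, integral_const_mul]
  field_simp
  norm_num
  ring

lemma aux_ibp1 {Φ g : E4 → ℝ} (hΦ : ContDiff ℝ 1 Φ) (hs : HasCompactSupport Φ)
    (hg : ContDiff ℝ 1 g) (e : E4) :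
    ∫ y, Φ y * fderiv ℝ g y e = - ∫ y, fderiv ℝ Φ y e * g y := by
  have h1 : Continuous Φ := hΦ.continuous
  have h2 : Continuous g := hg.continuous
  have h3 : Continuous (fderiv ℝ Φ) := hΦ.continuous_fderiv (by norm_num)
  have h4 : Continuous (fderiv ℝ g) := hg.continuous_fderiv (by norm_num)
  apply integral_mul_fderiv_eq_neg_fderiv_mul_of_integrable
  · exact Continuous.integrable_of_hasCompactSupport (by fun_prop) ((hs.fderiv_apply (𝕜 := ℝ) e).mul_right)
  · exact Continuous.integrable_of_hasCompactSupport (by fun_prop) hs.mul_right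
  · exact Continuous.integrable_of_hasCompactSupport (by fun_prop) hs.mul_right
  · exact fun y _ => hΦ.differentiable (by norm_num) y
  · exact fun y _ => hg.differentiable (by norm_num) y

/-- hypotheses on the cutoff -/
structure Cut (φ : ℝ → ℝ) : Prop where
  s : ContDiff ℝ (⊤ : ℕ∞) φ
  one : ∀ t ≤ (3/4 : ℝ), φ t = 1
  zero : ∀ t, (1:ℝ) ≤ t → φ t = 0

lemma Cut.dcont {φ : ℝ → ℝ} (h : Cut φ) : Continuous (deriv φ) :=
  h.s.continuous_deriv (by exact_mod_cast le_top)

lemma Cut.d_low {φ : ℝ → ℝ} (h : Cut φ) {t : ℝ} (ht : t < 3/4) : deriv φ t = 0 := by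
  have : φ =ᶠ[nhds t] fun _ => 1 := by
    filter_upwards [gt_mem_nhds ht] with s hs using h.one s hs.le
  rw [this.deriv_eq]; simp

lemma Cut.d_high {φ : ℝ → ℝ} (h : Cut φ) {t : ℝ} (ht : 1 ≤ t) : deriv φ t = 0 := by
  have hcl : IsClosed {t | deriv φ t = 0} := isClosed_eq h.dcont continuous_const
  have : Set.Ioi (1:ℝ) ⊆ {t | deriv φ t = 0} := by
    intro s hs
    have : φ =ᶠ[nhds s] fun _ => 0 := by
      filter_upwards [lt_mem_nhds hs] with s hs using h.zero s hs.le
    simp [this.deriv_eq]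
  have h2 := closure_minimal this hcl
  rw [closure_Ioi] at h2
  exact h2 ht

lemma Cut.psi_cont {φ : ℝ → ℝ} (h : Cut φ) : Continuous (fun t => deriv φ t * t⁻¹) := by
  rw [continuous_iff_continuousAt]
  intro t
  by_cases ht : t < 3/4
  · have : (fun t => deriv φ t * t⁻¹) =ᶠ[nhds t] fun _ => 0 := by
      filter_upwards [gt_mem_nhds ht] with s hs
      rw [h.d_low hs, zero_mul]
    exact continuousAt_const.congr this.symm
  · exact h.dcont.continuousAt.mul (continuousAt_inv₀ (by linarith))

lemma Cut.psi_high {φ : ℝ → ℝ} (h : Cut φ) (t : ℝ) (ht : 1 ≤ t) : deriv φ t * t⁻¹ = 0 := by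
  rw [h.d_high ht, zero_mul]

lemma Cut.psi_eq {φ : ℝ → ℝ} {r : ℝ} (hr : 0 < r) (ρ : ℝ) :
    deriv φ (ρ / r) * ρ⁻¹ = r⁻¹ * (deriv φ (ρ / r) * (ρ / r)⁻¹) := by
  rw [inv_div]; field_simp

lemma Cut.Phi_hasFDerivAt {φ : ℝ → ℝ} (h : Cut φ) (x : E4) {r : ℝ} (hr : 0 < r) (y : E4) :
    HasFDerivAt (fun y => φ (‖y - x‖ / r))
      ((r⁻¹ * (deriv φ (‖y - x‖ / r) * ‖y - x‖⁻¹)) • innerSL ℝ (y - x)) y := by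
  by_cases hy : ‖y - x‖ / r < 3 / 4
  · rw [h.d_low hy, zero_mul, mul_zero, zero_smul]
    have : (fun y => φ (‖y - x‖ / r)) =ᶠ[nhds y] fun _ => 1 := by
      have hc : Continuous fun y : E4 => ‖y - x‖ / r := by fun_prop
      filter_upwards [hc.continuousAt.eventually (gt_mem_nhds hy)] with s hs using h.one _ hs.le
    exact (hasFDerivAt_const (1:ℝ) y).congr_of_eventuallyEq this
  · have hpos : 0 < ‖y - x‖ := by
      by_contra hc
      have : ‖y - x‖ = 0 := le_antisymm (not_lt.1 hc) (norm_nonneg _)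
      rw [this] at hy; norm_num at hy
    have h1 : HasFDerivAt (fun y => ‖y - x‖ ^ 2) (2 • (innerSL ℝ (y - x)).comp (ContinuousLinearMap.id ℝ E4)) y :=
      ((hasFDerivAt_id y).sub_const x).norm_sq
    have h2 := h1.sqrt (by positivity)
    have h3 : (fun y : E4 => √(‖y - x‖ ^ 2)) = fun y => ‖y - x‖ := by
      funext y; rw [Real.sqrt_sq (norm_nonneg _)]
    rw [h3] at h2
    have h4 := h2.mul_const r⁻¹
    have h5 : HasDerivAt φ (deriv φ (‖y - x‖ / r)) (‖y - x‖ * r⁻¹) := by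
      rw [div_eq_mul_inv]
      exact (h.s.differentiable (by simp) _).hasDerivAt
    have h6 := h5.comp_hasFDerivAt y h4
    refine h6.congr_fderiv ?_
    ext z
    simp only [Real.sqrt_sq (norm_nonneg _), ContinuousLinearMap.comp_id, _root_.smul_apply,
      smul_eq_mul, nsmul_eq_mul]
    push_cast
    field_simp

lemma Cut.Phi_contDiff {φ : ℝ → ℝ} (h : Cut φ) (x : E4) {r : ℝ} (hr : 0 < r) :
    ContDiff ℝ 1 (fun y : E4 => φ (‖y - x‖ / r)) := by
  rw [contDiff_one_iff_fderiv]
  refine ⟨fun y => (h.Phi_hasFDerivAt x hr y).differentiableAt, ?_⟩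
  have : fderiv ℝ (fun y : E4 => φ (‖y - x‖ / r)) = fun y =>
      ((r⁻¹ * (r⁻¹ * (fun t => deriv φ t * t⁻¹) (‖y - x‖ / r))) • innerSL ℝ (y - x)) := by
    funext y
    rw [(h.Phi_hasFDerivAt x hr y).fderiv, Cut.psi_eq hr]
  rw [this]
  have hc : Continuous fun y : E4 => (fun t => deriv φ t * t⁻¹) (‖y - x‖ / r) :=
    h.psi_cont.comp (by fun_prop)
  exact (continuous_const.mul (continuous_const.mul hc)).smul (by fun_prop)

lemma Cut.Phi_supp {φ : ℝ → ℝ} (h : Cut φ) (x : E4) {r : ℝ} (hr : 0 < r) :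
    HasCompactSupport (fun y : E4 => φ (‖y - x‖ / r)) := by
  apply HasCompactSupport.intro (isCompact_closedBall x r)
  intro y hy
  rw [mem_closedBall, dist_eq_norm] at hy
  apply h.zero
  rw [le_div_iff₀ hr]; linarith

/-- coordinate vector -/
abbrev ee (i : Fin 4) : E4 := EuclideanSpace.single i (1:ℝ)

lemma sum_ee (z : E4) : ∑ i, (inner ℝ z (ee i)) • ee i = z := by
  have := (EuclideanSpace.basisFun (Fin 4) ℝ).sum_repr z
  simpa [EuclideanSpace.inner_single_right] using this

lemma ibp {φ : ℝ → ℝ} (h : Cut φ) {v w : E4 → E} (hv : ContDiff ℝ 2 v) (hw : ContDiff ℝ 1 w)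
    (x : E4) {r R : ℝ} (hr : 0 < r) (hrR : r ≤ R)
    (hharm : ∀ y ∈ ball x R, ∑ i, fderiv ℝ (fderiv ℝ v) y (ee i) (ee i) = 0) :
    ∫ y, (∑ i, ⟪fderiv ℝ w y (ee i), fderiv ℝ v y (ee i)⟫) * φ (‖y - x‖ / r) =
      -(r⁻¹ ^ 2) * ∫ y, ⟪w y, fderiv ℝ v y (y - x)⟫ *
        (fun t => deriv φ t * t⁻¹) (‖y - x‖ / r) := by
  have hv1 : ContDiff ℝ 1 (fderiv ℝ v) := hv.fderiv_right (by norm_num)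
  have cw := hw.continuous
  have cw' := hw.continuous_fderiv (by norm_num)
  have cv' := hv1.continuous
  have cvtwo := hv1.continuous_fderiv (by norm_num)
  have cφ := h.s.continuous
  set g : Fin 4 → E4 → ℝ := fun i y => ⟪w y, fderiv ℝ v y (ee i)⟫ with hgdef
  have hg : ∀ i, ContDiff ℝ 1 (g i) := fun i => hw.inner ℝ (hv1.clm_apply contDiff_const)
  have hg' : ∀ i y, fderiv ℝ (g i) y (ee i) =
      ⟪w y, fderiv ℝ (fderiv ℝ v) y (ee i) (ee i)⟫ + ⟪fderiv ℝ w y (ee i), fderiv ℝ v y (ee i)⟫ := by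
    intro i y
    have h1 := (hw.differentiable (by norm_num) y).hasFDerivAt
    have h2 := ((hv1.differentiable (by norm_num) y).hasFDerivAt).clm_apply (hasFDerivAt_const (ee i) y)
    rw [(h1.inner ℝ h2).fderiv]
    simp
  set Φ : E4 → ℝ := fun y => φ (‖y - x‖ / r) with hΦ
  have hΦc := h.Phi_contDiff x hr
  have hΦs := h.Phi_supp x hr
  have cΦ : Continuous Φ := hΦc.continuous
  have cΦ' := hΦc.continuous_fderiv (by norm_num)
  have e1 : ∀ i, ∫ y, Φ y * fderiv ℝ (g i) y (ee i) = - ∫ y, fderiv ℝ Φ y (ee i) * g i y :=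
    fun i => aux_ibp1 hΦc hΦs (hg i) (ee i)
  have e2 := Finset.sum_congr (s₁ := Finset.univ) rfl (fun i _ => e1 i)
  rw [Finset.sum_neg_distrib, ← integral_finsetSum, ← integral_finsetSum] at e2
  rotate_left
  · intro i _
    have := (hg i).continuous
    exact Continuous.integrable_of_hasCompactSupport (by fun_prop)
      ((hΦs.fderiv_apply (𝕜 := ℝ) (ee i)).mul_right)
  · intro i _
    have := (hg i).continuous_fderiv (by norm_num)
    exact Continuous.integrable_of_hasCompactSupport (by fun_prop) hΦs.mul_right
  have e3 : ∀ y, ∑ i, Φ y * fderiv ℝ (g i) y (ee i) =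
      (∑ i, ⟪fderiv ℝ w y (ee i), fderiv ℝ v y (ee i)⟫) * φ (‖y - x‖ / r) := by
    intro y
    rw [← Finset.mul_sum, mul_comm]
    by_cases hy : ‖y - x‖ < R
    · simp only [hg', Finset.sum_add_distrib, ← inner_sum]
      rw [hharm y (by rwa [mem_ball, dist_eq_norm])]
      simp [hΦ]
    · have : φ (‖y - x‖ / r) = 0 := h.zero _ (by rw [le_div_iff₀ hr]; linarith)
      simp [hΦ, this]
  have e4 : ∀ y, ∑ i, fderiv ℝ Φ y (ee i) * g i y = r⁻¹ ^ 2 * (⟪w y, fderiv ℝ v y (y - x)⟫ *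
        (fun t => deriv φ t * t⁻¹) (‖y - x‖ / r)) := by
    intro y
    have : fderiv ℝ v y (y - x) = ∑ i, (inner ℝ (y - x) (ee i)) • fderiv ℝ v y (ee i) := by
      conv_lhs => rw [← sum_ee (y - x)]
      simp only [map_sum, map_smul]
    rw [this, (h.Phi_hasFDerivAt x hr y).fderiv, Cut.psi_eq hr, inner_sum, Finset.sum_mul,
      Finset.mul_sum]
    refine Finset.sum_congr rfl fun i _ => ?_
    simp only [_root_.smul_apply, smul_eq_mul, inner_smul_right, innerSL_apply_apply, hgdef]
    ring
  simp only [e3, e4, integral_const_mul] at e2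
  rw [e2]; ring

lemma core {φ : ℝ → ℝ} (h : Cut φ) {v : E4 → E} (hv : ContDiff ℝ 2 v)
    (x : E4) {r R : ℝ} (hr : 0 < r) (hrR : r ≤ R)
    (hharm : ∀ y ∈ ball x R, ∑ i, fderiv ℝ (fderiv ℝ v) y (ee i) (ee i) = 0)
    (hH : 0 < Hphi φ v x r) :
    HasDerivAt (fun t => Nphi φ v x t)
        ((2 / (r * Hphi φ v x r)) *
          ∫ y, -(deriv φ (‖y - x‖ / r)) * ‖y - x‖⁻¹ *
            ‖fderiv ℝ v y (y - x) - Nphi φ v x r • v y‖ ^ 2) r := by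
  have hv1 : ContDiff ℝ 1 (fderiv ℝ v) := hv.fderiv_right (by norm_num)
  have hv0 : ContDiff ℝ 1 v := hv.of_le (by norm_num)
  have cv := hv.continuous
  have cv' := hv1.continuous
  have hdv : ∀ y, HasFDerivAt v (fderiv ℝ v y) y :=
    fun y => (hv0.differentiable (by norm_num) y).hasFDerivAt
  have hdv' : ∀ y, HasFDerivAt (fderiv ℝ v) (fderiv ℝ (fderiv ℝ v) y) y :=
    fun y => (hv1.differentiable (by norm_num) y).hasFDerivAt
  have hsymm : ∀ y a b, fderiv ℝ (fderiv ℝ v) y a b = fderiv ℝ (fderiv ℝ v) y b a := by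
    intro y a b
    exact (hv.contDiffAt.isSymmSndFDerivAt (by simp)).eq a b
  set w : E4 → E := fun y => fderiv ℝ v y (y - x) with hw
  have hwc : ContDiff ℝ 1 w := hv1.clm_apply (contDiff_id.sub contDiff_const)
  have cw := hwc.continuous
  have hw' : ∀ y z, fderiv ℝ w y z = fderiv ℝ (fderiv ℝ v) y z (y - x) + fderiv ℝ v y z := by
    intro y z
    have := (hdv' y).clm_apply ((hasFDerivAt_id y).sub_const x)
    rw [show fderiv ℝ w y = _ from this.fderiv]
    simp [add_comm]
  have hG : ContDiff ℝ 1 (gradSq v) := by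
    unfold gradSq
    exact ContDiff.sum fun i _ => (hv1.clm_apply contDiff_const).norm_sq ℝ
  have hG' : ∀ y z, fderiv ℝ (gradSq v) y z =
      ∑ i, 2 * ⟪fderiv ℝ v y (ee i), fderiv ℝ (fderiv ℝ v) y z (ee i)⟫ := by
    intro y z
    have h1 : HasFDerivAt (gradSq v) _ y := HasFDerivAt.fun_sum (u := Finset.univ) fun i _ =>
      ((hdv' y).clm_apply (hasFDerivAt_const (ee i) y)).norm_sq
    rw [h1.fderiv]
    simp [two_mul]
  set ψ : ℝ → ℝ := fun t => deriv φ t * t⁻¹ with hψ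
  have cψ : Continuous ψ := h.psi_cont
  have zψ : ∀ t, 1 ≤ t → ψ t = 0 := h.psi_high
  set J : (E4 → ℝ) → ℝ := fun g => ∫ y, g y * ψ (‖y - x‖ / r) with hJ
  -- integration by parts
  have D1 : Dphi φ v x r = -(r⁻¹ ^ 2) * J (fun y => ⟪v y, w y⟫) := by
    rw [hJ, ← ibp h hv hv0 x hr hrR hharm]
    simp only [Dphi, gradSq, real_inner_self_eq_norm_sq]
  have cG' := hG.continuous_fderiv (by norm_num)
  have D2 : Dphi φ v x r + 1 / 2 * ∫ y, fderiv ℝ (gradSq v) y (y - x) * φ (‖y - x‖ / r)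
      = -(r⁻¹ ^ 2) * J (fun y => ‖w y‖ ^ 2) := by
    have := ibp h hv hwc x hr hrR hharm
    simp only [hJ, ← real_inner_self_eq_norm_sq]
    rw [← this, ← integral_const_mul, Dphi, ← integral_add]
    · congr 1; ext y
      rw [hG', ← mul_assoc, ← add_mul]
      congr 1
      simp only [hw', gradSq, Finset.mul_sum, ← Finset.sum_add_distrib]
      refine Finset.sum_congr rfl fun i _ => ?_
      rw [inner_add_left, real_inner_self_eq_norm_sq, hsymm y (ee i), real_inner_comm]
      ring
    · exact aux_integrable hG.continuous h.s.continuous h.zero x hr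
    · exact (aux_integrable (g := fun y => fderiv ℝ (gradSq v) y (y - x)) (by fun_prop)
        h.s.continuous h.zero x hr).const_mul _
  have Dd : HasDerivAt (fun t => Dphi φ v x t) _ r := aux_scaling hG h.s.continuous h.zero x hr
  have Hrep : ∀ t, 0 < t → Hphi φ v x t = - (t⁻¹ * ∫ y, ‖v y‖ ^ 2 * ψ (‖y - x‖ / t)) := by
    intro t ht
    rw [Hphi, ← integral_const_mul]
    congr 2; ext y
    rw [mul_assoc, mul_comm (‖y - x‖⁻¹), Cut.psi_eq ht]
    ring
  have hvsq : ContDiff ℝ 1 (fun y => ‖v y‖ ^ 2) := hv0.norm_sq ℝ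
  have Jd := aux_scaling hvsq cψ zψ x hr
  have J' : ∫ y, fderiv ℝ (fun y => ‖v y‖ ^ 2) y (y - x) * ψ (‖y - x‖ / r)
      = 2 * J (fun y => ⟪v y, w y⟫) := by
    rw [hJ, ← integral_const_mul]
    congr 1; ext y
    rw [(hdv y).norm_sq.fderiv]
    simp [two_mul, hw, add_mul]
  rw [J'] at Jd
  have Hd : HasDerivAt (fun t => Hphi φ v x t) _ r :=
    (((hasDerivAt_inv hr.ne').mul Jd).neg).congr_of_eventuallyEq
      (by filter_upwards [lt_mem_nhds hr] with t ht using Hrep t ht)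
  have Nd : HasDerivAt (fun t => Nphi φ v x t) _ r :=
    ((hasDerivAt_id r).mul Dd).div Hd hH.ne'
  refine Nd.congr_deriv ?_
  have Hr := Hrep r hr
  change Hphi φ v x r = - (r⁻¹ * J (fun y => ‖v y‖ ^ 2)) at Hr
  set N := Nphi φ v x r with hN
  have sq : ∫ y, -(deriv φ (‖y - x‖ / r)) * ‖y - x‖⁻¹ * ‖w y - N • v y‖ ^ 2
      = -r⁻¹ * (J (fun y => ‖w y‖ ^ 2) - 2 * N * J (fun y => ⟪v y, w y⟫)
        + N ^ 2 * J (fun y => ‖v y‖ ^ 2)) := by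
    simp only [hJ]
    rw [← integral_const_mul, ← integral_const_mul, ← integral_sub, ← integral_add,
      ← integral_const_mul]
    · congr 1; ext y
      rw [neg_mul, Cut.psi_eq hr, norm_sub_sq_real, inner_smul_right, norm_smul, real_inner_comm,
        mul_pow, Real.norm_eq_abs, sq_abs]
      ring
    · exact (aux_integrable (g := fun y => ‖w y‖ ^ 2) (by fun_prop) cψ zψ x hr).sub
        ((aux_integrable (g := fun y => ⟪v y, w y⟫) (by fun_prop) cψ zψ x hr).const_mul _)
    · exact ((aux_integrable (g := fun y => ‖v y‖ ^ 2) (by fun_prop) cψ zψ x hr).const_mul _)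
    · exact (aux_integrable (g := fun y => ‖w y‖ ^ 2) (by fun_prop) cψ zψ x hr)
    · exact ((aux_integrable (g := fun y => ⟪v y, w y⟫) (by fun_prop) cψ zψ x hr).const_mul _)
  rw [sq]
  have hN2 : N = r * Dphi φ v x r / Hphi φ v x r := rfl
  change ((1 * Dphi φ v x r + r * (4 / r * Dphi φ v x r + _)) * Hphi φ v x r
    - r * Dphi φ v x r * -(-(r ^ 2)⁻¹ * J (fun y => ‖v y‖ ^ 2) + r⁻¹ *
      (4 / r * J (fun y => ‖v y‖ ^ 2) + _))) / _ = _
  set K := ∫ y, fderiv ℝ (gradSq v) y (y - x) * φ (‖y - x‖ / r)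
  set H := Hphi φ v x r
  set D := Dphi φ v x r
  generalize J (fun y => ‖v y‖ ^ 2) = j0 at *
  generalize J (fun y => ⟪v y, w y⟫) = j1 at *
  generalize J (fun y => ‖w y‖ ^ 2) = j2 at *
  have ej0 : j0 = - r * H := by rw [Hr]; field_simp
  have ej1 : j1 = - r ^ 2 * D := by rw [D1]; field_simp
  have ej2 : j2 = - r ^ 2 * (D + 1 / 2 * K) := by rw [D2]; field_simp
  rw [ej0, ej1, ej2, hN2]
  have := hH.ne'
  field_simp
  ring

lemma transfer {φ : ℝ → ℝ} (h : Cut φ) {u v : E4 → E} (x : E4) {t R : ℝ} (ht : 0 < t) (htR : t < R)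
    (huv : ∀ y ∈ ball x R, v =ᶠ[nhds y] u) :
    Dphi φ u x t = Dphi φ v x t ∧ Hphi φ u x t = Hphi φ v x t ∧ ∀ c : ℝ,
      (∫ y, -(deriv φ (‖y - x‖ / t)) * ‖y - x‖⁻¹ * ‖fderiv ℝ u y (y - x) - c • u y‖ ^ 2) =
      ∫ y, -(deriv φ (‖y - x‖ / t)) * ‖y - x‖⁻¹ * ‖fderiv ℝ v y (y - x) - c • v y‖ ^ 2 := by
  have key : ∀ y, (v y = u y ∧ fderiv ℝ v y = fderiv ℝ u y) ∨
      (φ (‖y - x‖ / t) = 0 ∧ deriv φ (‖y - x‖ / t) = 0) := by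
    intro y
    by_cases hy : ‖y - x‖ < R
    · have := huv y (by rwa [mem_ball, dist_eq_norm])
      exact Or.inl ⟨this.eq_of_nhds, this.fderiv_eq⟩
    · have : 1 ≤ ‖y - x‖ / t := by rw [le_div_iff₀ ht]; linarith
      exact Or.inr ⟨h.zero _ this, h.d_high this⟩
  refine ⟨?_, ?_, fun c => ?_⟩
  · unfold Dphi gradSq
    congr 1; ext y
    rcases key y with ⟨_, h2⟩ | ⟨h1, _⟩
    · rw [h2]
    · rw [h1]; simp
  · unfold Hphi
    congr 2; ext y
    rcases key y with ⟨h1, _⟩ | ⟨_, h2⟩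
    · rw [h1]
    · rw [h2]; simp
  · congr 1; ext y
    rcases key y with ⟨h1, h2⟩ | ⟨_, h2⟩
    · rw [h1, h2]
    · rw [h2]; simp

lemma exists_ext {u : E4 → E} {Ω : Set E4} (hΩ : IsOpen Ω) (hu : ContDiffOn ℝ (⊤ : ℕ∞) u Ω)
    (x : E4) {R b : ℝ} (hR : 0 < R) (hRb : R < b) (hball : closedBall x b ⊆ Ω) :
    ∃ v : E4 → E, ContDiff ℝ 2 v ∧ ∀ y ∈ ball x R, v =ᶠ[nhds y] u := by
  let χ : ContDiffBump x := ⟨R, b, hR, hRb⟩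
  refine ⟨fun y => χ y • u y, ?_, ?_⟩
  · rw [contDiff_iff_contDiffAt]
    intro y
    by_cases hy : y ∈ Ω
    · have h1 : ContDiffAt ℝ 2 u y :=
        (hu.contDiffAt (hΩ.mem_nhds hy)).of_le (WithTop.coe_le_coe.2 (le_top : (2 : ℕ∞) ≤ ⊤))
      exact χ.contDiffAt.smul h1
    · have hy' : y ∉ closedBall x b := fun hc => hy (hball hc)
      have : (fun y => χ y • u y) =ᶠ[nhds y] fun _ => 0 := by
        filter_upwards [isClosed_closedBall.isOpen_compl.mem_nhds hy'] with z hz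
        have : χ z = 0 := χ.zero_of_le_dist (by
          rw [Set.mem_compl_iff, mem_closedBall, not_le] at hz; exact hz.le)
        simp [this]
      exact contDiffAt_const.congr_of_eventuallyEq this
  · intro y hy
    filter_upwards [χ.eventuallyEq_one_of_mem_ball hy] with z hz
    simp [hz]

/-- Flat-case monotonicity of the smoothed frequency (Corollary 4.5, radial derivative):
`∂_r N_φ(x,r) = (2/(r H_φ(x,r))) ∫ −φ'(|y−x|/r) |y−x|⁻¹ |∂_{η_x}u − N_φ(x,r) u|² dy ≥ 0`,
so `N_φ(x,·)` is nondecreasing on `(a,b)`. -/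
theorem stmt_12 (φ : ℝ → ℝ) (hφs : ContDiff ℝ (⊤ : ℕ∞) φ) (hφa : Antitone φ)
    (hφ1 : ∀ t ≤ (3/4 : ℝ), φ t = 1) (hφ0 : ∀ t, (1:ℝ) ≤ t → φ t = 0)
    (Ω : Set E4) (hΩ : IsOpen Ω) (u : E4 → E) (hu : IsHarmonicOn u Ω)
    (x : E4) (a b : ℝ) (ha : 0 < a) (hab : a < b)
    (hball : closedBall x b ⊆ Ω)
    (hH : ∀ t ∈ Set.Ioo a b, 0 < Hphi φ u x t) :
    (∀ r ∈ Set.Ioo a b,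
      HasDerivAt (fun t => Nphi φ u x t)
        ((2 / (r * Hphi φ u x r)) *
          ∫ y, -(deriv φ (‖y - x‖ / r)) * ‖y - x‖⁻¹ *
            ‖fderiv ℝ u y (y - x) - Nphi φ u x r • u y‖ ^ 2) r ∧
      0 ≤ (2 / (r * Hphi φ u x r)) *
          ∫ y, -(deriv φ (‖y - x‖ / r)) * ‖y - x‖⁻¹ *
            ‖fderiv ℝ u y (y - x) - Nphi φ u x r • u y‖ ^ 2) ∧
    MonotoneOn (fun t => Nphi φ u x t) (Set.Ioo a b) := by
  have h : Cut φ := ⟨hφs, hφ1, hφ0⟩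
  have main : ∀ r ∈ Set.Ioo a b,
      HasDerivAt (fun t => Nphi φ u x t)
        ((2 / (r * Hphi φ u x r)) *
          ∫ y, -(deriv φ (‖y - x‖ / r)) * ‖y - x‖⁻¹ *
            ‖fderiv ℝ u y (y - x) - Nphi φ u x r • u y‖ ^ 2) r ∧
      0 ≤ (2 / (r * Hphi φ u x r)) *
          ∫ y, -(deriv φ (‖y - x‖ / r)) * ‖y - x‖⁻¹ *
            ‖fderiv ℝ u y (y - x) - Nphi φ u x r • u y‖ ^ 2 := by
    intro r hr
    have hr0 : 0 < r := ha.trans hr.1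
    have hHr := hH r hr
    constructor
    · obtain ⟨R, hrR, hRb⟩ := exists_between hr.2
      obtain ⟨v, hv, huv⟩ := exists_ext hΩ hu.1 x (hr0.trans hrR) hRb hball
      have hharm : ∀ y ∈ ball x R, ∑ i, fderiv ℝ (fderiv ℝ v) y (ee i) (ee i) = 0 := by
        intro y hy
        have h1 := hu.2 y (hball (ball_subset_closedBall (ball_subset_ball hRb.le hy)))
        simp only [iteratedFDeriv_two_apply] at h1
        rw [(huv y hy).fderiv.fderiv_eq]
        simpa using h1
      obtain ⟨_, tH, tI⟩ := transfer h x hr0 hrR huv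
      have tN : ∀ t, 0 < t → t < R → Nphi φ u x t = Nphi φ v x t := by
        intro t ht htR
        obtain ⟨t1, t2, _⟩ := transfer h x ht htR huv
        rw [Nphi, Nphi, t1, t2]
      rw [tI, tH, tN r hr0 hrR]
      refine (core h hv x hr0 hrR.le hharm (tH ▸ hHr)).congr_of_eventuallyEq ?_
      filter_upwards [lt_mem_nhds hr0, gt_mem_nhds hrR] with t ht htR using tN t ht htR
    · refine mul_nonneg (by positivity) (integral_nonneg fun y => ?_)
      have : deriv φ (‖y - x‖ / r) ≤ 0 := hφa.deriv_nonpos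
      have : 0 ≤ -(deriv φ (‖y - x‖ / r)) := by linarith
      positivity
  refine ⟨main, ?_⟩
  apply monotoneOn_of_deriv_nonneg (convex_Ioo a b)
  · exact fun r hr => (main r hr).1.continuousAt.continuousWithinAt
  · rw [interior_Ioo]
    exact fun r hr => (main r hr).1.differentiableAt.differentiableWithinAt
  · rw [interior_Ioo]
    intro r hr
    rw [(main r hr).1.deriv]
    exact (main r hr).2
end
end

section
/- Let v ∈ ℝ⁴ be a fixed vector, and let x, r be such that B̄_{x'}(r) ⊆ Ω for all x' in a neighborhood of x and H_φ(x',r) > 0 for all such x'. Then x ↦ N_φ(x,r) is differentiable in the direction v at x, and ∂_v N_φ(x,r) = (2/H_φ(x,r)) ∫ −|y−x|⁻¹ φ'(|y−x|/r) ⟨∂_{η_x}u(y) − N_φ(x,r)·u(y), ∂_v u(y)⟩ dy. -/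
open Metric MeasureTheory
open scoped RealInnerProductSpace

noncomputable section

variable {E : Type*} [NormedAddCommGroup E] [InnerProductSpace ℝ E] [FiniteDimensional ℝ E]

section helpers
open Filter Topology

def Kf (φ : ℝ → ℝ) (r : ℝ) (y : E4) : ℝ := φ (‖y‖ / r)
def Lf (φ : ℝ → ℝ) (r : ℝ) (y : E4) : ℝ := ‖y‖⁻¹ * deriv φ (‖y‖ / r)

lemma norm_div_small (r : ℝ) (hr : 0 < r) :
    ∀ᶠ y : E4 in 𝓝 0, ‖y‖ / r < 3/4 := by
  have h : ContinuousAt (fun y : E4 => ‖y‖ / r) 0 := by fun_prop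
  apply h.eventually_lt_const
  simp

lemma deriv_phi_zero_lt {φ : ℝ → ℝ} (hφ1 : ∀ t ≤ (3/4 : ℝ), φ t = 1) {t : ℝ} (ht : t < 3/4) :
    deriv φ t = 0 := by
  have : φ =ᶠ[𝓝 t] fun _ => (1:ℝ) := by
    filter_upwards [Iio_mem_nhds ht] with s hs using hφ1 s (le_of_lt hs)
  rw [this.deriv_eq]; simp

lemma deriv_phi_zero_gt {φ : ℝ → ℝ} (hφ0 : ∀ t, (1:ℝ) ≤ t → φ t = 0) {t : ℝ} (ht : 1 < t) :
    deriv φ t = 0 := by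
  have : φ =ᶠ[𝓝 t] fun _ => (0:ℝ) := by
    filter_upwards [Ioi_mem_nhds ht] with s hs using hφ0 s (le_of_lt hs)
  rw [this.deriv_eq]; simp

lemma Kf_contDiff {φ : ℝ → ℝ} (hφs : ContDiff ℝ (⊤ : ℕ∞) φ)
    (hφ1 : ∀ t ≤ (3/4 : ℝ), φ t = 1) {r : ℝ} (hr : 0 < r) : ContDiff ℝ 1 (Kf φ r) := by
  rw [contDiff_iff_contDiffAt]
  intro y
  by_cases hy : y = 0
  · subst hy
    have : Kf φ r =ᶠ[𝓝 0] fun _ => (1:ℝ) := by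
      filter_upwards [norm_div_small r hr] with s hs using hφ1 _ (le_of_lt hs)
    exact contDiffAt_const.congr_of_eventuallyEq this
  · have h1 : ContDiff ℝ 1 φ := hφs.of_le (by exact_mod_cast le_top)
    exact h1.contDiffAt.comp y ((contDiffAt_norm ℝ hy).div_const r)

lemma Kf_fderiv {φ : ℝ → ℝ} (hφs : ContDiff ℝ (⊤ : ℕ∞) φ)
    (hφ1 : ∀ t ≤ (3/4 : ℝ), φ t = 1) {r : ℝ} (hr : 0 < r) (y w : E4) :
    fderiv ℝ (Kf φ r) y w = r⁻¹ * Lf φ r y * ⟪y, w⟫ := by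
  by_cases hy : y = 0
  · subst hy
    have : Kf φ r =ᶠ[𝓝 0] fun _ => (1:ℝ) := by
      filter_upwards [norm_div_small r hr] with s hs using hφ1 _ (le_of_lt hs)
    rw [this.fderiv_eq]; simp
  · have h1 : HasDerivAt φ (deriv φ (‖y‖ / r)) (‖y‖ / r) :=
      ((hφs.differentiable (by simp)) _).hasDerivAt
    have h2 : HasFDerivAt (fun y : E4 => ‖y‖) (‖y‖⁻¹ • innerSL ℝ y) y := by
      have hn := (hasStrictFDerivAt_norm_sq y).hasFDerivAt.sqrt (by simpa using hy)
      simp only [Real.sqrt_sq (norm_nonneg _)] at hn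
      refine hn.congr_fderiv ?_
      ext z
      simp
      field_simp
    have h3 := (h1.comp_hasFDerivAt y (h2.mul_const r⁻¹))
    have h4 : HasFDerivAt (Kf φ r) _ y := h3
    rw [h4.fderiv]
    simp [Lf]
    ring

lemma Lf_continuous {φ : ℝ → ℝ} (hφs : ContDiff ℝ (⊤ : ℕ∞) φ)
    (hφ1 : ∀ t ≤ (3/4 : ℝ), φ t = 1) {r : ℝ} (hr : 0 < r) : Continuous (Lf φ r) := by
  rw [continuous_iff_continuousAt]
  intro y
  by_cases hy : y = 0
  · subst hy
    have : Lf φ r =ᶠ[𝓝 0] fun _ => (0:ℝ) := by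
      filter_upwards [norm_div_small r hr] with s hs
      simp [Lf, deriv_phi_zero_lt hφ1 hs]
    exact continuousAt_const.congr this.symm
  · have h1 : Continuous (deriv φ) := hφs.continuous_deriv (by simp)
    have h2 : ContinuousAt (fun y : E4 => ‖y‖⁻¹) y :=
      continuous_norm.continuousAt.inv₀ (by simpa using hy)
    exact h2.mul (by fun_prop)

lemma Kf_compact {φ : ℝ → ℝ} (hφ0 : ∀ t, (1:ℝ) ≤ t → φ t = 0) {r : ℝ} (hr : 0 < r) :
    HasCompactSupport (Kf φ r) := by
  apply HasCompactSupport.intro (isCompact_closedBall (0:E4) r)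
  intro y hy
  apply hφ0
  rw [le_div_iff₀ hr]
  simp at hy
  linarith

lemma Lf_compact {φ : ℝ → ℝ} (hφ0 : ∀ t, (1:ℝ) ≤ t → φ t = 0) {r : ℝ} (hr : 0 < r) :
    HasCompactSupport (Lf φ r) := by
  apply HasCompactSupport.intro (isCompact_closedBall (0:E4) r)
  intro y hy
  simp at hy
  rw [Lf, deriv_phi_zero_gt hφ0, mul_zero]
  rw [lt_div_iff₀ hr]
  linarith

lemma deriv_int {g K : E4 → ℝ} (hg : ContDiff ℝ 1 g) (hgc : HasCompactSupport g)
    (hK : Continuous K) (hKc : HasCompactSupport K) (x v : E4) :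
    HasDerivAt (fun t : ℝ => ∫ y, g y * K (y - (x + t • v)))
      (∫ y, fderiv ℝ g y v * K (y - x)) 0 := by
  have hg' : Continuous (fderiv ℝ g) := hg.continuous_fderiv (by simp)
  have e1 : ∀ t : ℝ, ∫ y, g y * K (y - (x + t • v)) = ∫ y, g (y + (x + t • v)) * K y := by
    intro t
    rw [← integral_add_right_eq_self _ (x + t • v)]
    simp
  have e2 : ∫ y, fderiv ℝ g y v * K (y - x) = ∫ y, fderiv ℝ g (y + (x + (0:ℝ) • v)) v * K y := by
    rw [← integral_add_right_eq_self _ x]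
    simp
  simp_rw [e1]
  rw [e2]
  have hc : HasCompactSupport (fun y => fderiv ℝ g y v) := by
    exact (hgc.fderiv (𝕜 := ℝ)).comp_left (g := fun A : E4 →L[ℝ] ℝ => A v) (by simp)
  obtain ⟨C, hC⟩ := hc.exists_bound_of_continuous (by fun_prop)
  have hgcont := hg.continuous
  refine (hasDerivAt_integral_of_dominated_loc_of_deriv_le (s := Set.univ)
    (F := fun (t : ℝ) y => g (y + (x + t • v)) * K y)
    (F' := fun (t : ℝ) y => fderiv ℝ g (y + (x + t • v)) v * K y)
    (bound := fun y => C * ‖K y‖) (μ := volume)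
    univ_mem ?_ ?_ ?_ ?_ ?_ ?_).2
  · exact Eventually.of_forall fun t => by
      apply Continuous.aestronglyMeasurable; fun_prop
  · apply Continuous.integrable_of_hasCompactSupport (by fun_prop)
    exact hKc.mul_left
  · apply Continuous.aestronglyMeasurable; fun_prop
  · refine Eventually.of_forall fun y t _ => ?_
    rw [norm_mul]
    gcongr
    exact hC _
  · exact ((hK.integrable_of_hasCompactSupport hKc).norm).const_mul C
  · refine Eventually.of_forall fun y t _ => ?_
    apply HasDerivAt.mul_const
    have h1 : HasDerivAt (fun t : ℝ => y + (x + t • v)) v t := by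
      have := (((hasDerivAt_id t).smul_const v).const_add x).const_add y
      simpa using this
    exact ((hg.differentiable (by simp)) _).hasFDerivAt.comp_hasDerivAt t h1

lemma D_deriv {φ : ℝ → ℝ} (hφs : ContDiff ℝ (⊤ : ℕ∞) φ)
    (hφ1 : ∀ t ≤ (3/4 : ℝ), φ t = 1) (hφ0 : ∀ t, (1:ℝ) ≤ t → φ t = 0) {r : ℝ} (hr : 0 < r)
    {w : E4 → E} (hw : ContDiff ℝ 2 w) (hwc : HasCompactSupport w) (x v : E4)
    (hh : ∀ y ∈ closedBall x r, ∑ i : Fin 4,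
      fderiv ℝ (fderiv ℝ w) y (EuclideanSpace.single i (1:ℝ)) (EuclideanSpace.single i (1:ℝ)) = 0) :
    HasDerivAt (fun t : ℝ => Dphi φ w (x + t • v) r)
      (-2 * r⁻¹ * ∫ y, Lf φ r (y - x) * ⟪fderiv ℝ w y (y - x), fderiv ℝ w y v⟫) 0 := by
  have hw1 : ContDiff ℝ 1 (fderiv ℝ w) := hw.fderiv_right (by norm_num)
  have hwd : Differentiable ℝ (fderiv ℝ w) := hw1.differentiable (by simp)
  have hw2 : Continuous (fderiv ℝ (fderiv ℝ w)) := hw1.continuous_fderiv (by simp)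
  have hw1c := hw1.continuous
  have hK := Kf_contDiff hφs hφ1 hr
  have hKcont := hK.continuous
  have hL := Lf_continuous hφs hφ1 hr
  have hg : ContDiff ℝ 1 (gradSq w) := by
    unfold gradSq
    apply ContDiff.sum
    intro i _
    exact (hw1.clm_apply contDiff_const).norm_sq ℝ
  have hgc : HasCompactSupport (gradSq w) := by
    exact (hwc.fderiv (𝕜 := ℝ)).comp_left (g := fun A : E4 →L[ℝ] E =>
      ∑ i : Fin 4, ‖A (EuclideanSpace.single i (1:ℝ))‖ ^ 2) (by simp)
  have key := deriv_int hg hgc hKcont (Kf_compact hφ0 hr) x v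
  have hKs : HasCompactSupport (fun y => Kf φ r (y - x)) :=
    (Kf_compact hφ0 hr).comp_homeomorph (Homeomorph.subRight x)
  have hLs : HasCompactSupport (fun y => Lf φ r (y - x)) :=
    (Lf_compact hφ0 hr).comp_homeomorph (Homeomorph.subRight x)
  have hda : ∀ (z : E4) (y : E4), HasFDerivAt (fun y => fderiv ℝ w y z)
      ((fderiv ℝ (fderiv ℝ w) y).flip z) y := by
    intro z y
    have := (hwd y).hasFDerivAt.clm_apply (hasFDerivAt_const z y)
    simpa using this
  have hsymm : ∀ y a b, fderiv ℝ (fderiv ℝ w) y a b = fderiv ℝ (fderiv ℝ w) y b a := by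
    intro y a b
    exact (hw.contDiffAt.isSymmSndFDerivAt (by simp)) a b
  -- integration by parts for each direction
  have ibp : ∀ i : Fin 4, ∫ y, ⟪fderiv ℝ w y (EuclideanSpace.single i (1:ℝ)), fderiv ℝ w y v⟫ *
        (r⁻¹ * Lf φ r (y - x) * (y - x) i) =
      - ∫ y, (⟪fderiv ℝ w y (EuclideanSpace.single i (1:ℝ)),
            fderiv ℝ (fderiv ℝ w) y v (EuclideanSpace.single i (1:ℝ))⟫ +
          ⟪fderiv ℝ (fderiv ℝ w) y (EuclideanSpace.single i (1:ℝ)) (EuclideanSpace.single i (1:ℝ)),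
            fderiv ℝ w y v⟫) * Kf φ r (y - x) := by
    intro i
    have hfd : ∀ y, HasFDerivAt (fun y => ⟪fderiv ℝ w y (EuclideanSpace.single i (1:ℝ)),
        fderiv ℝ w y v⟫) _ y := fun y => (hda (EuclideanSpace.single i (1:ℝ)) y).inner ℝ (hda v y)
    have e1 : ∀ y, fderiv ℝ (fun y => ⟪fderiv ℝ w y (EuclideanSpace.single i (1:ℝ)),
        fderiv ℝ w y v⟫) y (EuclideanSpace.single i (1:ℝ)) =
        ⟪fderiv ℝ w y (EuclideanSpace.single i (1:ℝ)),
            fderiv ℝ (fderiv ℝ w) y v (EuclideanSpace.single i (1:ℝ))⟫ +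
          ⟪fderiv ℝ (fderiv ℝ w) y (EuclideanSpace.single i (1:ℝ)) (EuclideanSpace.single i (1:ℝ)),
            fderiv ℝ w y v⟫ := by
      intro y
      rw [(hfd y).fderiv, hsymm y v]
      simp
    have e2 : ∀ y, fderiv ℝ (fun y => Kf φ r (y - x)) y (EuclideanSpace.single i (1:ℝ)) =
        r⁻¹ * Lf φ r (y - x) * (y - x) i := by
      intro y
      rw [fderiv_comp_sub, Kf_fderiv hφs hφ1 hr]
      simp [EuclideanSpace.inner_single_right]
    have := integral_mul_fderiv_eq_neg_fderiv_mul_of_integrable (μ := (volume : Measure E4))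
      (f := fun y => ⟪fderiv ℝ w y (EuclideanSpace.single i (1:ℝ)), fderiv ℝ w y v⟫)
      (g := fun y => Kf φ r (y - x)) (v := EuclideanSpace.single i (1:ℝ)) ?_ ?_ ?_ ?_ ?_
    · simpa only [e1, e2] using this
    · simp only [e1]
      apply Continuous.integrable_of_hasCompactSupport (by fun_prop)
      exact hKs.mul_left
    · simp only [e2]
      apply Continuous.integrable_of_hasCompactSupport (by fun_prop)
      exact (hLs.mul_left.mul_right).mul_left
    · apply Continuous.integrable_of_hasCompactSupport (by fun_prop)
      exact hKs.mul_left
    · intro y _; exact (hfd y).differentiableAt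
    · intro y _
      exact ((hK.differentiable (by simp)).comp (differentiable_id.sub_const x)) y
  have hD : (fun t : ℝ => Dphi φ w (x + t • v) r) =
      fun t : ℝ => ∫ y, gradSq w y * Kf φ r (y - (x + t • v)) := rfl
  rw [hD]
  refine key.congr_deriv (Eq.symm ?_)
  have s1 := Finset.sum_congr (rfl : (Finset.univ : Finset (Fin 4)) = _) (fun i _ => ibp i)
  rw [Finset.sum_neg_distrib, ← integral_finsetSum, ← integral_finsetSum] at s1
  rotate_left
  · intro i _
    apply Continuous.integrable_of_hasCompactSupport (by fun_prop)
    exact hKs.mul_left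
  · intro i _
    apply Continuous.integrable_of_hasCompactSupport (by fun_prop)
    exact (hLs.mul_left.mul_right).mul_left
  have f1 : ∀ y, ∑ i : Fin 4, ⟪fderiv ℝ w y (EuclideanSpace.single i (1:ℝ)), fderiv ℝ w y v⟫ *
        (r⁻¹ * Lf φ r (y - x) * (y - x) i) =
      r⁻¹ * (Lf φ r (y - x) * ⟪fderiv ℝ w y (y - x), fderiv ℝ w y v⟫) := by
    intro y
    have hz : ∀ z : E4, fderiv ℝ w y z = ∑ i : Fin 4, z i •
        fderiv ℝ w y (EuclideanSpace.single i (1:ℝ)) := by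
      intro z
      have : z = ∑ i : Fin 4, z i • EuclideanSpace.single i (1:ℝ) := by
        ext j
        simp [Finset.sum_apply, Pi.single_apply]
      conv_lhs => rw [this]
      simp
    rw [hz (y - x), sum_inner, Finset.mul_sum, Finset.mul_sum]
    refine Finset.sum_congr rfl fun i _ => ?_
    rw [real_inner_smul_left]
    ring
  have f2 : ∀ y, ∑ i : Fin 4, (⟪fderiv ℝ w y (EuclideanSpace.single i (1:ℝ)),
            fderiv ℝ (fderiv ℝ w) y v (EuclideanSpace.single i (1:ℝ))⟫ +
          ⟪fderiv ℝ (fderiv ℝ w) y (EuclideanSpace.single i (1:ℝ)) (EuclideanSpace.single i (1:ℝ)),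
            fderiv ℝ w y v⟫) * Kf φ r (y - x) =
      2⁻¹ * (fderiv ℝ (gradSq w) y v * Kf φ r (y - x)) := by
    intro y
    by_cases hy : y ∈ closedBall x r
    · have hgd : HasFDerivAt (gradSq w) _ y := HasFDerivAt.fun_sum (u := Finset.univ)
        (fun i _ => (hda (EuclideanSpace.single i (1:ℝ)) y).norm_sq)
      rw [← Finset.sum_mul, Finset.sum_add_distrib, ← sum_inner, hh y hy, hgd.fderiv]
      simp [← Finset.mul_sum]
      ring
    · have : Kf φ r (y - x) = 0 := by
        apply hφ0
        rw [le_div_iff₀ hr]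
        simp [dist_eq_norm] at hy
        linarith
      simp [this]
  simp only [f1, f2] at s1
  rw [integral_const_mul, integral_const_mul] at s1
  linear_combination (-2) * s1

lemma H_deriv {φ : ℝ → ℝ} (hφs : ContDiff ℝ (⊤ : ℕ∞) φ)
    (hφ1 : ∀ t ≤ (3/4 : ℝ), φ t = 1) (hφ0 : ∀ t, (1:ℝ) ≤ t → φ t = 0) {r : ℝ} (hr : 0 < r)
    {w : E4 → E} (hw : ContDiff ℝ 2 w) (hwc : HasCompactSupport w) (x v : E4) :
    HasDerivAt (fun t : ℝ => Hphi φ w (x + t • v) r)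
      (-2 * ∫ y, Lf φ r (y - x) * ⟪w y, fderiv ℝ w y v⟫) 0 := by
  have hw1 : ContDiff ℝ 1 w := hw.of_le (by norm_num)
  have hg : ContDiff ℝ 1 (fun y => ‖w y‖ ^ 2) := hw1.norm_sq ℝ
  have hgc : HasCompactSupport (fun y => ‖w y‖ ^ 2) :=
    hwc.comp_left (g := fun a : E => ‖a‖ ^ 2) (by simp)
  have key := (deriv_int hg hgc (Lf_continuous hφs hφ1 hr) (Lf_compact hφ0 hr) x v).neg
  have hH : (fun t : ℝ => Hphi φ w (x + t • v) r) =
      -fun t : ℝ => ∫ y, ‖w y‖ ^ 2 * Lf φ r (y - (x + t • v)) := by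
    ext t
    simp [Hphi, Lf, mul_assoc]
  rw [hH]
  refine key.congr_deriv (Eq.symm ?_)
  rw [← integral_const_mul, ← integral_neg]
  congr 1
  ext y
  have := ((hw1.differentiable (by simp)) y).hasFDerivAt.norm_sq
  rw [this.fderiv]
  simp
  ring

lemma cutoff {Ω : Set E4} (hΩ : IsOpen Ω) {u : E4 → E} (hu : ContDiffOn ℝ (⊤ : ℕ∞) u Ω)
    {x : E4} {r : ℝ} (hr : 0 < r) (hx : closedBall x r ⊆ Ω) :
    ∃ w : E4 → E, ∃ R, r < R ∧ ContDiff ℝ 2 w ∧ HasCompactSupport w ∧ ball x R ⊆ Ω ∧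
      ∀ y ∈ ball x R, w =ᶠ[𝓝 y] u := by
  obtain ⟨δ, hδ, hsub⟩ := (isCompact_closedBall x r).exists_cthickening_subset_open hΩ hx
  rw [cthickening_closedBall hδ.le hr.le] at hsub
  let χ : ContDiffBump x := ⟨r + δ/2, δ + r, by linarith, by linarith⟩
  refine ⟨fun y => χ y • u y, r + δ/2, by linarith, ?_, ?_, ?_, ?_⟩
  · rw [contDiff_iff_contDiffAt]
    intro y
    by_cases hy : y ∈ closedBall x (δ + r)
    · have h1 : ContDiffAt ℝ 2 u y :=
        ((hu.contDiffAt (hΩ.mem_nhds (hsub hy))).of_le (by norm_cast))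
      exact χ.contDiffAt.smul h1
    · have h2 : (fun y => χ y • u y) =ᶠ[𝓝 y] fun _ => 0 := by
        filter_upwards [isClosed_closedBall.isOpen_compl.mem_nhds hy] with z hz
        rw [χ.zero_of_le_dist, zero_smul]
        simp at hz
        exact hz.le
      exact contDiffAt_const.congr_of_eventuallyEq h2
  · exact χ.hasCompactSupport.smul_right
  · refine subset_trans ?_ hsub
    exact (ball_subset_ball (by linarith)).trans ball_subset_closedBall
  · intro y hy
    filter_upwards [χ.eventuallyEq_one_of_mem_ball hy] with z hz
    simp [hz]

lemma D_congr {φ : ℝ → ℝ} (hφ0 : ∀ t, (1:ℝ) ≤ t → φ t = 0) {r : ℝ} (hr : 0 < r)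
    {u w : E4 → E} {x : E4} (h : ∀ y ∈ closedBall x r, w =ᶠ[𝓝 y] u) :
    Dphi φ u x r = Dphi φ w x r := by
  unfold Dphi
  congr 1
  ext y
  by_cases hy : y ∈ closedBall x r
  · simp [gradSq, (h y hy).fderiv_eq]
  · rw [hφ0 (‖y - x‖ / r)]
    · simp
    · rw [le_div_iff₀ hr]
      simp [dist_eq_norm] at hy
      linarith

lemma Lf_zero {φ : ℝ → ℝ} (hφ0 : ∀ t, (1:ℝ) ≤ t → φ t = 0) {r : ℝ} (hr : 0 < r)
    {x y : E4} (hy : y ∉ closedBall x r) : deriv φ (‖y - x‖ / r) = 0 := by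
  apply deriv_phi_zero_gt hφ0
  rw [lt_div_iff₀ hr]
  simp [dist_eq_norm] at hy
  linarith

lemma H_congr {φ : ℝ → ℝ} (hφ0 : ∀ t, (1:ℝ) ≤ t → φ t = 0) {r : ℝ} (hr : 0 < r)
    {u w : E4 → E} {x : E4} (h : ∀ y ∈ closedBall x r, w =ᶠ[𝓝 y] u) :
    Hphi φ u x r = Hphi φ w x r := by
  unfold Hphi
  congr 2
  ext y
  by_cases hy : y ∈ closedBall x r
  · simp [(h y hy).eq_of_nhds]
  · simp [Lf_zero hφ0 hr hy]

end helpers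

/-- Flat-case spatial derivative of the smoothed frequency (Corollary 4.5):
`∂_v N_φ(x,r) = (2/H_φ(x,r)) ∫ −|y−x|⁻¹ φ'(|y−x|/r)
  ⟨∂_{η_x}u(y) − N_φ(x,r) u(y), ∂_v u(y)⟩ dy`. -/
theorem stmt_13 (φ : ℝ → ℝ) (hφs : ContDiff ℝ (⊤ : ℕ∞) φ) (hφa : Antitone φ)
    (hφ1 : ∀ t ≤ (3/4 : ℝ), φ t = 1) (hφ0 : ∀ t, (1:ℝ) ≤ t → φ t = 0)
    (Ω : Set E4) (hΩ : IsOpen Ω) (u : E4 → E) (hu : IsHarmonicOn u Ω)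
    (v : E4) (x : E4) (r : ℝ) (hr : 0 < r)
    (hx : ∀ᶠ x' in nhds x, closedBall x' r ⊆ Ω ∧ 0 < Hphi φ u x' r) :
    HasDerivAt (fun t : ℝ => Nphi φ u (x + t • v) r)
      ((2 / Hphi φ u x r) *
        ∫ y, -(‖y - x‖⁻¹ * deriv φ (‖y - x‖ / r)) *
          ⟪fderiv ℝ u y (y - x) - Nphi φ u x r • u y, fderiv ℝ u y v⟫) 0 := by
  classical
  have hx0 := hx.self_of_nhds
  obtain ⟨w, R, hrR, hw, hwc, hRΩ, hwu⟩ := cutoff hΩ hu.1 hr hx0.1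
  have hnear : ∀ x' ∈ ball x (R - r), ∀ y ∈ closedBall x' r, w =ᶠ[nhds y] u := by
    intro x' hx' y hy
    apply hwu
    simp only [mem_ball, mem_closedBall] at *
    linarith [dist_triangle y x' x]
  have hxx := hnear x (mem_ball_self (by linarith))
  have hDd := D_deriv hφs hφ1 hφ0 hr hw hwc x v (by
    intro y hy
    have hyR : y ∈ ball x R := closedBall_subset_ball hrR hy
    have h := hu.2 y (hRΩ hyR)
    simp only [iteratedFDeriv_two_apply] at h
    rw [(hwu y hyR).fderiv.fderiv_eq]
    simpa using h)
  have hHd := H_deriv hφs hφ1 hφ0 hr hw hwc x v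
  have hD0 := D_congr hφ0 hr hxx
  have hH0 := H_congr hφ0 hr hxx
  have hHne : Hphi φ w x r ≠ 0 := by rw [← hH0]; exact hx0.2.ne'
  have hN := (hDd.const_mul r).div hHd (by simpa using hHne)
  have hev : (fun t : ℝ => Nphi φ u (x + t • v) r) =ᶠ[nhds 0]
      ((fun t : ℝ => r * Dphi φ w (x + t • v) r) / fun t : ℝ => Hphi φ w (x + t • v) r) := by
    have hc : ContinuousAt (fun t : ℝ => x + t • v) 0 := by fun_prop
    have hm : ball x (R - r) ∈ nhds (x + (0:ℝ) • v) := by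
      simpa using ball_mem_nhds x (by linarith)
    filter_upwards [hc.preimage_mem_nhds hm] with t ht
    simp only [Nphi, Pi.div_apply]
    rw [D_congr hφ0 hr (hnear _ ht), H_congr hφ0 hr (hnear _ ht)]
  refine HasDerivAt.congr_of_eventuallyEq ?_ hev
  refine hN.congr_deriv (Eq.symm ?_)
  have hint : (∫ y, -(‖y - x‖⁻¹ * deriv φ (‖y - x‖ / r)) *
          ⟪fderiv ℝ u y (y - x) - Nphi φ u x r • u y, fderiv ℝ u y v⟫) =
      -(∫ y, Lf φ r (y - x) * ⟪fderiv ℝ w y (y - x), fderiv ℝ w y v⟫) +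
      Nphi φ u x r * ∫ y, Lf φ r (y - x) * ⟪w y, fderiv ℝ w y v⟫ := by
    have hL := Lf_continuous hφs hφ1 hr
    have hLs : HasCompactSupport (fun y => Lf φ r (y - x)) :=
      (Lf_compact hφ0 hr).comp_homeomorph (Homeomorph.subRight x)
    have hwcont := hw.continuous
    have hw1 : Continuous (fderiv ℝ w) := hw.continuous_fderiv (by simp)
    rw [← integral_const_mul, ← integral_neg, ← integral_add]
    · congr 1
      ext y
      by_cases hy : y ∈ closedBall x r
      · rw [← (hxx y hy).fderiv_eq, ← (hxx y hy).eq_of_nhds, inner_sub_left, real_inner_smul_left]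
        simp only [Lf]
        ring
      · simp [Lf, Lf_zero hφ0 hr hy]
    · apply Integrable.neg
      apply Continuous.integrable_of_hasCompactSupport (by fun_prop)
      exact hLs.mul_right
    · apply Integrable.const_mul
      apply Continuous.integrable_of_hasCompactSupport (by fun_prop)
      exact hLs.mul_right
  rw [hint, Nphi, hD0, hH0]
  simp only [zero_smul, add_zero]
  field_simp
  ring
end
end

section
/- Let x ∈ ℝ⁴ and r̄ > 0 with B̄_x(r̄) ⊆ Ω. Then the function r ↦ H_φ(x,r)/r³ is nondecreasing on (0, r̄); equivalently, for all 0 < s < r ≤ r̄ one has H_φ(x,r) ≥ (r/s)³ H_φ(x,s). -/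
open Metric MeasureTheory
open scoped RealInnerProductSpace

noncomputable section

variable {E : Type*} [NormedAddCommGroup E] [InnerProductSpace ℝ E] [FiniteDimensional ℝ E]

section Helpers

open Filter Topology

lemma aux_deriv_zero_right (φ : ℝ → ℝ) (hφa : Antitone φ) (hφ0 : ∀ t, (1:ℝ) ≤ t → φ t = 0)
    (t : ℝ) (ht : 1 ≤ t) : deriv φ t = 0 := by
  apply IsLocalMin.deriv_eq_zero
  refine Filter.Eventually.of_forall fun s => ?_
  rw [hφ0 t ht, ← hφ0 (max s 1) (le_max_right _ _)]
  exact hφa (le_max_left _ _)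

lemma aux_deriv_zero_left (φ : ℝ → ℝ) (hφa : Antitone φ) (hφ1 : ∀ t ≤ (3/4 : ℝ), φ t = 1)
    (t : ℝ) (ht : t ≤ 3/4) : deriv φ t = 0 := by
  apply IsLocalMax.deriv_eq_zero
  refine Filter.Eventually.of_forall fun s => ?_
  rw [hφ1 t ht, ← hφ1 (min s (3/4)) (min_le_right _ _)]
  exact hφa (min_le_left _ _)

lemma aux_Phi_fderiv (φ : ℝ → ℝ) (hφs : ContDiff ℝ (⊤ : ℕ∞) φ) (hφa : Antitone φ)
    (hφ1 : ∀ t ≤ (3/4 : ℝ), φ t = 1) (z : E4) :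
    HasFDerivAt (fun z : E4 => φ ‖z‖) ((‖z‖⁻¹ * deriv φ ‖z‖) • innerSL ℝ z) z := by
  by_cases hz : z = 0
  · subst hz
    have : (fun z : E4 => φ ‖z‖) =ᶠ[𝓝 0] fun _ => (1:ℝ) := by
      filter_upwards [Metric.ball_mem_nhds (0:E4) (show (0:ℝ) < 3/4 by norm_num)] with y hy
      exact hφ1 _ (by simpa using (mem_ball_zero_iff.1 hy).le)
    simpa using (hasFDerivAt_const (1:ℝ) (0:E4)).congr_of_eventuallyEq this
  · have h1 : HasFDerivAt (fun z : E4 => ‖z‖) (‖z‖⁻¹ • innerSL ℝ z) z := by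
      have h2 := (hasStrictFDerivAt_norm_sq z).hasFDerivAt.sqrt (by simpa using hz)
      have h3 : (fun y : E4 => √(‖y‖ ^ 2)) = fun y => ‖y‖ := by
        ext y; exact Real.sqrt_sq (norm_nonneg _)
      rw [h3] at h2
      have h5 : (1 / (2 * √(‖z‖ ^ 2))) • (2 • innerSL ℝ z) = ‖z‖⁻¹ • innerSL ℝ z := by
        rw [Real.sqrt_sq (norm_nonneg _), ← Nat.cast_smul_eq_nsmul ℝ, smul_smul]
        congr 1
        have : ‖z‖ ≠ 0 := by simpa using hz
        push_cast
        field_simp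
      rw [h5] at h2
      exact h2
    have h4 : HasDerivAt φ (deriv φ ‖z‖) ‖z‖ :=
      ((hφs.differentiable (by simp)) _).hasDerivAt
    have := h4.comp_hasFDerivAt z h1
    rw [smul_smul, mul_comm] at this
    exact this

lemma aux_k_cont (φ : ℝ → ℝ) (hφs : ContDiff ℝ (⊤ : ℕ∞) φ) (hφa : Antitone φ)
    (hφ1 : ∀ t ≤ (3/4 : ℝ), φ t = 1) :
    Continuous (fun z : E4 => ‖z‖⁻¹ * deriv φ ‖z‖) := by
  have hd : Continuous (deriv φ) := hφs.continuous_deriv (by simp)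
  rw [continuous_iff_continuousAt]
  intro z
  by_cases hz : z = 0
  · subst hz
    have : (fun z : E4 => ‖z‖⁻¹ * deriv φ ‖z‖) =ᶠ[𝓝 0] fun _ => (0:ℝ) := by
      filter_upwards [Metric.ball_mem_nhds (0:E4) (show (0:ℝ) < 3/4 by norm_num)] with y hy
      rw [aux_deriv_zero_left φ hφa hφ1 _ (by simpa using (mem_ball_zero_iff.1 hy).le), mul_zero]
    exact continuousAt_const.congr this.symm
  · exact (continuousAt_id.norm.inv₀ (by simpa using hz)).mul
      (hd.continuousAt.comp continuousAt_id.norm)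

lemma aux_cs (f : E4 → ℝ) (hf : ∀ z : E4, 1 ≤ ‖z‖ → f z = 0) : HasCompactSupport f := by
  apply HasCompactSupport.intro (isCompact_closedBall (0:E4) 1)
  intro z hz
  apply hf
  simp at hz
  exact hz.le

lemma aux_key (φ : ℝ → ℝ) (hφs : ContDiff ℝ (⊤ : ℕ∞) φ) (hφa : Antitone φ)
    (hφ1 : ∀ t ≤ (3/4 : ℝ), φ t = 1) (hφ0 : ∀ t, (1:ℝ) ≤ t → φ t = 0)
    (w : E4 → ℝ) (hw : ContDiff ℝ (⊤ : ℕ∞) w) (hc : HasCompactSupport w) (x : E4) (r : ℝ) :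
    HasDerivAt (fun r : ℝ => -∫ z : E4, w (x + r • z) * (‖z‖⁻¹ * deriv φ ‖z‖))
      (r * ∫ z : E4, (∑ i : Fin 4,
        fderiv ℝ (fun y => fderiv ℝ w y (EuclideanSpace.single i (1:ℝ))) (x + r • z)
          (EuclideanSpace.single i (1:ℝ))) * φ ‖z‖) r := by
  have hk := aux_k_cont φ hφs hφa hφ1
  have hkc : HasCompactSupport (fun z : E4 => ‖z‖⁻¹ * deriv φ ‖z‖) := by
    apply aux_cs
    intro z hz
    rw [aux_deriv_zero_right φ hφa hφ0 _ hz, mul_zero]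
  have hwc : Continuous w := hw.continuous
  have hdw : ContDiff ℝ (⊤ : ℕ∞) (fderiv ℝ w) := hw.fderiv_right (by simp)
  have hdwc : Continuous (fderiv ℝ w) := hdw.continuous
  obtain ⟨C, hC⟩ := hdwc.bounded_above_of_compact_support (hc.fderiv ℝ)
  have hP : ContDiff ℝ 1 (fun z : E4 => φ ‖z‖) := by
    rw [contDiff_one_iff_fderiv]
    refine ⟨fun z => (aux_Phi_fderiv φ hφs hφa hφ1 z).differentiableAt, ?_⟩
    have : fderiv ℝ (fun z : E4 => φ ‖z‖) = fun z => (‖z‖⁻¹ * deriv φ ‖z‖) • innerSL ℝ z := by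
      ext1 z; exact (aux_Phi_fderiv φ hφs hφa hφ1 z).fderiv
    rw [this]
    exact hk.smul (innerSL ℝ).continuous
  have hPc : HasCompactSupport (fun z : E4 => φ ‖z‖) := aux_cs _ fun z hz => hφ0 _ hz
  have main := (hasDerivAt_integral_of_dominated_loc_of_deriv_le (μ := (volume : Measure E4))
    (F := fun r z => w (x + r • z) * (‖z‖⁻¹ * deriv φ ‖z‖))
    (F' := fun r z => fderiv ℝ w (x + r • z) z * (‖z‖⁻¹ * deriv φ ‖z‖))
    (bound := fun z => C * ‖z‖ * ‖‖z‖⁻¹ * deriv φ ‖z‖‖) (x₀ := r) (s := Set.univ) univ_mem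
    (Eventually.of_forall fun r => by
      apply Continuous.aestronglyMeasurable
      fun_prop)
    (by
      apply Continuous.integrable_of_hasCompactSupport
      · fun_prop
      · exact hkc.mul_left)
    (by
      apply Continuous.aestronglyMeasurable
      refine Continuous.mul ?_ hk
      exact (hdwc.comp (by fun_prop)).clm_apply continuous_id)
    (by
      refine Eventually.of_forall fun z r _ => ?_
      rw [norm_mul]
      gcongr
      exact (ContinuousLinearMap.le_opNorm _ _).trans (by gcongr; exact hC _))
    (by
      apply Continuous.integrable_of_hasCompactSupport
      · exact (continuous_const.mul continuous_norm).mul hk.norm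
      · exact hkc.norm.mul_left)
    (by
      refine Eventually.of_forall fun z r _ => ?_
      apply HasDerivAt.mul_const
      have h1 : HasDerivAt (fun r : ℝ => x + r • z) z r := by
        simpa using ((hasDerivAt_id r).smul_const z).const_add x
      exact ((hw.differentiable (by simp)) _).hasFDerivAt.comp_hasDerivAt r h1)).2
  refine HasDerivAt.congr_deriv main.neg ?_
  -- integration by parts
  have hcomp : ∀ i : Fin 4, ContDiff ℝ (⊤ : ℕ∞)
      (fun y => fderiv ℝ w y (EuclideanSpace.single i (1:ℝ))) := fun i =>
    hdw.clm_apply contDiff_const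
  have hcomp2 : ∀ i : Fin 4, ContDiff ℝ (⊤ : ℕ∞)
      (fun z : E4 => fderiv ℝ w (x + r • z) (EuclideanSpace.single i (1:ℝ))) := fun i =>
    (hcomp i).comp (contDiff_const.add (contDiff_id.const_smul r))
  have hfd : ∀ (i : Fin 4) (z : E4),
      fderiv ℝ (fun z : E4 => fderiv ℝ w (x + r • z) (EuclideanSpace.single i (1:ℝ))) z
        (EuclideanSpace.single i (1:ℝ)) =
      r * fderiv ℝ (fun y => fderiv ℝ w y (EuclideanSpace.single i (1:ℝ))) (x + r • z)
        (EuclideanSpace.single i (1:ℝ)) := by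
    intro i z
    have h1 : HasFDerivAt (fun z : E4 => x + r • z) (r • ContinuousLinearMap.id ℝ E4) z :=
      ((hasFDerivAt_id z).const_smul r).const_add x
    have h2 := (((hcomp i).differentiable (by simp)) (x + r • z)).hasFDerivAt.comp z h1
    have h3 := h2.fderiv
    rw [Function.comp_def] at h3
    rw [h3]
    simp
  have hcd : ∀ i : Fin 4, Continuous fun z : E4 =>
      fderiv ℝ (fun z : E4 => fderiv ℝ w (x + r • z) (EuclideanSpace.single i (1:ℝ))) z
        (EuclideanSpace.single i (1:ℝ)) := fun i =>
    ((hcomp2 i).continuous_fderiv (by simp)).clm_apply continuous_const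
  have hcP : ∀ i : Fin 4, Continuous fun z : E4 =>
      fderiv ℝ (fun z : E4 => φ ‖z‖) z (EuclideanSpace.single i (1:ℝ)) := fun i =>
    (hP.continuous_fderiv (by simp)).clm_apply continuous_const
  have hi1 : ∀ i : Fin 4, Integrable (fun z : E4 =>
      fderiv ℝ (fun z : E4 => fderiv ℝ w (x + r • z) (EuclideanSpace.single i (1:ℝ))) z
        (EuclideanSpace.single i (1:ℝ)) * φ ‖z‖) := fun i =>
    ((hcd i).mul hP.continuous).integrable_of_hasCompactSupport hPc.mul_left
  have hi2 : ∀ i : Fin 4, Integrable (fun z : E4 =>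
      fderiv ℝ w (x + r • z) (EuclideanSpace.single i (1:ℝ)) *
        fderiv ℝ (fun z : E4 => φ ‖z‖) z (EuclideanSpace.single i (1:ℝ))) := fun i =>
    ((hcomp2 i).continuous.mul (hcP i)).integrable_of_hasCompactSupport
      (hPc.fderiv_apply ℝ _).mul_left
  have hibp := fun i : Fin 4 => integral_mul_fderiv_eq_neg_fderiv_mul_of_integrable
    (μ := (volume : Measure E4))
    (f := fun z : E4 => fderiv ℝ w (x + r • z) (EuclideanSpace.single i (1:ℝ)))
    (g := fun z : E4 => φ ‖z‖) (v := EuclideanSpace.single i (1:ℝ))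
    (hi1 i) (hi2 i)
    (((hcomp2 i).continuous.mul hP.continuous).integrable_of_hasCompactSupport hPc.mul_left)
    (fun z _ => ((hcomp2 i).differentiable (by simp)) z)
    (fun z _ => (hP.differentiable (by simp)) z)
  have e1 : ∫ z : E4, fderiv ℝ w (x + r • z) z * (‖z‖⁻¹ * deriv φ ‖z‖) =
      ∑ i : Fin 4, ∫ z : E4, fderiv ℝ w (x + r • z) (EuclideanSpace.single i (1:ℝ)) *
        fderiv ℝ (fun z : E4 => φ ‖z‖) z (EuclideanSpace.single i (1:ℝ)) := by
    rw [← integral_finsetSum _ (fun i _ => hi2 i)]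
    congr 1
    ext z
    have hz : z = ∑ i : Fin 4, z i • EuclideanSpace.single i (1:ℝ) := by
      ext j
      simp [Finset.sum_apply, Pi.single_apply]
    have hL : fderiv ℝ w (x + r • z) z =
        ∑ i : Fin 4, z i * fderiv ℝ w (x + r • z) (EuclideanSpace.single i (1:ℝ)) := by
      generalize fderiv ℝ w (x + r • z) = L
      conv_lhs => rw [hz]
      simp [map_sum]
    rw [hL, (aux_Phi_fderiv φ hφs hφa hφ1 z).fderiv, Finset.sum_mul]
    refine Finset.sum_congr rfl fun i _ => ?_
    have hin : innerSL ℝ z (EuclideanSpace.single i (1:ℝ)) = z i := by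
      rw [innerSL_apply_apply, real_inner_comm, EuclideanSpace.inner_single_left]; simp
    rw [_root_.smul_apply, hin, smul_eq_mul]
    ring
  rw [e1, Finset.sum_congr rfl (fun i _ => hibp i), Finset.sum_neg_distrib, neg_neg,
    ← integral_finsetSum _ (fun i _ => hi1 i), ← integral_const_mul]
  congr 1
  ext z
  rw [← mul_assoc, Finset.mul_sum, Finset.sum_mul]
  exact Finset.sum_congr rfl fun i _ => by rw [hfd]

lemma aux_subharm (Ω : Set E4) (hΩ : IsOpen Ω) (u : E4 → E) (hu : IsHarmonicOn u Ω)
    (w : E4 → ℝ) (y : E4) (hy : y ∈ Ω) (hwu : w =ᶠ[𝓝 y] fun y => ‖u y‖ ^ 2) :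
    0 ≤ ∑ i : Fin 4, fderiv ℝ (fun y => fderiv ℝ w y (EuclideanSpace.single i (1:ℝ))) y
          (EuclideanSpace.single i (1:ℝ)) := by
  obtain ⟨hs, hl⟩ := hu
  have hca : ∀ z ∈ Ω, ContDiffAt ℝ (⊤ : ℕ∞) u z := fun z hz => hs.contDiffAt (hΩ.mem_nhds hz)
  have key : ∀ i : Fin 4, fderiv ℝ (fun y => fderiv ℝ w y (EuclideanSpace.single i (1:ℝ))) y
          (EuclideanSpace.single i (1:ℝ)) =
      2 * ‖fderiv ℝ u y (EuclideanSpace.single i (1:ℝ))‖ ^ 2 +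
      2 * ⟪u y, iteratedFDeriv ℝ 2 u y
        ![EuclideanSpace.single i (1:ℝ), EuclideanSpace.single i 1]⟫ := by
    intro i
    have h1 : (fun y => fderiv ℝ w y (EuclideanSpace.single i (1:ℝ))) =ᶠ[𝓝 y]
        fun y => 2 * ⟪u y, fderiv ℝ u y (EuclideanSpace.single i (1:ℝ))⟫ := by
      filter_upwards [hwu.eventuallyEq_nhds, hΩ.mem_nhds hy] with z hz hzΩ
      rw [hz.fderiv_eq]
      have := ((hca z hzΩ).differentiableAt (by simp)).hasFDerivAt.norm_sq
      rw [this.fderiv]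
      simp
    rw [h1.fderiv_eq]
    have hu1 := ((hca y hy).differentiableAt (by simp)).hasFDerivAt
    have hu2 : DifferentiableAt ℝ (fderiv ℝ u) y :=
      ((hca y hy).fderiv_right (m := 1) (by
        rw [one_add_one_eq_two]; exact WithTop.coe_le_coe.2 le_top)).differentiableAt (by simp)
    have hu3 := hu2.hasFDerivAt.clm_apply (hasFDerivAt_const (EuclideanSpace.single i (1:ℝ)) y)
    have h4 := (hu1.inner ℝ hu3).const_mul 2
    rw [h4.fderiv, iteratedFDeriv_two_apply]
    simp [real_inner_self_eq_norm_sq]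
    ring
  rw [Finset.sum_congr rfl (fun i _ => key i), Finset.sum_add_distrib, ← Finset.mul_sum,
    ← Finset.mul_sum, ← inner_sum, hl y hy, inner_zero_right]
  positivity

lemma aux_H (φ : ℝ → ℝ) (hφa : Antitone φ) (hφ0 : ∀ t, (1:ℝ) ≤ t → φ t = 0)
    (u : E4 → E) (w : E4 → ℝ) (x : E4) (rb : ℝ)
    (hw : ∀ y ∈ closedBall x rb, w y = ‖u y‖ ^ 2) (r : ℝ) (hr : 0 < r) (hrb : r ≤ rb) :
    Hphi φ u x r = r ^ 3 * -∫ z : E4, w (x + r • z) * (‖z‖⁻¹ * deriv φ ‖z‖) := by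
  unfold Hphi
  rw [mul_neg, neg_inj]
  rw [← integral_add_left_eq_self _ x]
  have h := Measure.integral_comp_smul (volume : Measure E4)
    (fun y => ‖u (x + y)‖ ^ 2 * ‖x + y - x‖⁻¹ * deriv φ (‖x + y - x‖ / r)) r
  have h2 : ∫ z : E4, ‖u (x + r • z)‖ ^ 2 * ‖x + r • z - x‖⁻¹ * deriv φ (‖x + r • z - x‖ / r)
      = r⁻¹ * ∫ z : E4, w (x + r • z) * (‖z‖⁻¹ * deriv φ ‖z‖) := by
    rw [← integral_const_mul]
    congr 1
    ext z
    have : ‖x + r • z - x‖ = r * ‖z‖ := by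
      rw [add_sub_cancel_left, norm_smul, Real.norm_of_nonneg hr.le]
    rw [this, mul_div_cancel_left₀ _ hr.ne']
    rcases le_total 1 ‖z‖ with hz | hz
    · rw [aux_deriv_zero_right φ hφa hφ0 _ hz]; simp
    · rw [hw _ (by
        rw [mem_closedBall, dist_eq_norm, this]
        nlinarith [norm_nonneg z]), mul_inv]
      ring
  rw [h2] at h
  have h3 : |(r ^ Module.finrank ℝ E4)⁻¹| = (r ^ 4)⁻¹ := by
    rw [abs_of_pos (by positivity)]; simp
  rw [h3, smul_eq_mul] at h
  field_simp at h ⊢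
  linarith

end Helpers

/-- Flat-case monotonicity of `H_φ(x,r)/r³` (flat analogue of Lemma 3.3). -/
theorem stmt_14 (φ : ℝ → ℝ) (hφs : ContDiff ℝ (⊤ : ℕ∞) φ) (hφa : Antitone φ)
    (hφ1 : ∀ t ≤ (3/4 : ℝ), φ t = 1) (hφ0 : ∀ t, (1:ℝ) ≤ t → φ t = 0)
    (Ω : Set E4) (hΩ : IsOpen Ω) (u : E4 → E) (hu : IsHarmonicOn u Ω)
    (x : E4) (rb : ℝ) (hrb : 0 < rb) (hball : closedBall x rb ⊆ Ω) :
    MonotoneOn (fun t => Hphi φ u x t / t ^ 3) (Set.Ioo 0 rb) ∧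
    ∀ s r : ℝ, 0 < s → s < r → r ≤ rb →
      (r / s) ^ 3 * Hphi φ u x s ≤ Hphi φ u x r := by
  obtain ⟨δ, hδ, hδΩ⟩ := (isCompact_closedBall x rb).exists_cthickening_subset_open hΩ hball
  rw [cthickening_closedBall hδ.le hrb.le] at hδΩ
  let χ : ContDiffBump x := ⟨rb, δ + rb, hrb, by linarith⟩
  let w : E4 → ℝ := fun y => χ y * ‖u y‖ ^ 2
  have hts : tsupport χ ⊆ Ω := by
    rw [χ.tsupport_eq]; simpa [χ, add_comm] using hδΩ
  have hwc : HasCompactSupport w := χ.hasCompactSupport.mul_right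
  have hws : ContDiff ℝ (⊤ : ℕ∞) w := by
    rw [contDiff_iff_contDiffAt]
    intro y
    by_cases hy : y ∈ tsupport χ
    · exact χ.contDiffAt.mul ((hu.1.contDiffAt (hΩ.mem_nhds (hts hy))).norm_sq ℝ)
    · have : w =ᶠ[nhds y] fun _ => (0:ℝ) := by
        filter_upwards [(isClosed_tsupport _).isOpen_compl.mem_nhds hy] with z hz
        simp [w, image_eq_zero_of_notMem_tsupport hz]
      exact contDiffAt_const.congr_of_eventuallyEq this
  have hw : ∀ y ∈ closedBall x rb, w y = ‖u y‖ ^ 2 := by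
    intro y hy
    simp [w, χ.one_of_mem_closedBall hy]
  have hder := aux_key φ hφs hφa hφ1 hφ0 w hws hwc x
  have hH := aux_H φ hφa hφ0 u w x rb hw
  set G := fun r : ℝ => -∫ z : E4, w (x + r • z) * (‖z‖⁻¹ * deriv φ ‖z‖) with hG
  have hmono : MonotoneOn G (Set.Icc 0 rb) := by
    apply monotoneOn_of_deriv_nonneg (convex_Icc _ _)
      (fun r _ => (hder r).continuousAt.continuousWithinAt)
      (fun r _ => (hder r).differentiableAt.differentiableWithinAt)
    intro r hr
    rw [interior_Icc] at hr
    rw [(hder r).deriv]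
    refine mul_nonneg hr.1.le (integral_nonneg fun z => ?_)
    rcases le_total 1 ‖z‖ with hz | hz
    · simp [hφ0 _ hz]
    · refine mul_nonneg ?_ (by rw [← hφ0 1 le_rfl]; exact hφa hz)
      have hm : x + r • z ∈ ball x rb := by
        rw [mem_ball, dist_eq_norm, add_sub_cancel_left, norm_smul, Real.norm_of_nonneg hr.1.le]
        nlinarith [hr.1, hr.2, norm_nonneg z]
      apply aux_subharm Ω hΩ u hu w _ (hball (ball_subset_closedBall hm))
      filter_upwards [isOpen_ball.mem_nhds hm] with y hy
      exact hw y (ball_subset_closedBall hy)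
  constructor
  · intro s hs r hr hsr
    have h1 := hmono ⟨hs.1.le, hs.2.le⟩ ⟨hr.1.le, hr.2.le⟩ hsr
    have hs0 := hs.1
    have hr0 := hr.1
    show Hphi φ u x s / s ^ 3 ≤ Hphi φ u x r / r ^ 3
    rw [hH s hs.1 hs.2.le, hH r hr.1 hr.2.le, mul_div_cancel_left₀ _ (by positivity),
      mul_div_cancel_left₀ _ (by positivity)]
    exact h1
  · intro s r hs hsr hr
    have hr0 := hs.trans hsr
    have h1 := hmono ⟨hs.le, hsr.le.trans hr⟩ ⟨hr0.le, hr⟩ hsr.le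
    rw [hH s hs (hsr.le.trans hr), hH r hr0 hr, ← mul_assoc, div_pow,
      div_mul_cancel₀ _ (by positivity)]
    exact mul_le_mul_of_nonneg_left h1 (by positivity)
end
end

section
/- For every Λ > 0 there exists a constant C > 0, depending only on φ and Λ, with the following property. Let x ∈ ℝ⁴ and r > 0, suppose u is harmonic on an open set containing the closed ball B̄_x(2r), and suppose that H_φ(x,t) > 0 and N_φ(x,t) ≤ Λ for all t ∈ (0, 2r]. Then: (1) ∫_{B_x(r)} |u(y)|² dy ≤ C·r·H_φ(x,r); (2) ∫_{B_x(r)} |u(y)|·|∇u(y)| dy ≤ C·H_φ(x,r); (3) ∫_{B_x(r)} |∇u(y)|² dy ≤ C·r⁻¹·H_φ(x,r). -/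
open Metric MeasureTheory
open scoped RealInnerProductSpace

noncomputable section

variable {E : Type*} [NormedAddCommGroup E] [InnerProductSpace ℝ E] [FiniteDimensional ℝ E]

namespace S16

def ee (i : Fin 4) : E4 := EuclideanSpace.single i (1:ℝ)

structure Cut (φ : ℝ → ℝ) : Prop where
  s : ContDiff ℝ (⊤ : ℕ∞) φ
  a : Antitone φ
  h1 : ∀ t ≤ (3/4 : ℝ), φ t = 1
  h0 : ∀ t, (1:ℝ) ≤ t → φ t = 0

def psi (φ : ℝ → ℝ) (z : E4) : ℝ := φ ‖z‖
def ww (φ : ℝ → ℝ) (z : E4) : ℝ := - (‖z‖⁻¹ * deriv φ ‖z‖)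

variable {φ : ℝ → ℝ}

lemma Cut.d1 (h : Cut φ) {t : ℝ} (ht : t < 3/4) : deriv φ t = 0 := by
  have : φ =ᶠ[nhds t] fun _ => 1 := by
    filter_upwards [Iio_mem_nhds ht] with s hs using h.h1 s (le_of_lt hs)
  rw [this.deriv_eq]; simp

lemma Cut.cd (h : Cut φ) : Continuous (deriv φ) := h.s.continuous_deriv (by simp)

lemma Cut.d0 (h : Cut φ) {t : ℝ} (ht : 1 ≤ t) : deriv φ t = 0 := by
  have hcl : IsClosed {s : ℝ | deriv φ s = 0} := isClosed_eq h.cd continuous_const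
  have hsub : Set.Ioi (1:ℝ) ⊆ {s : ℝ | deriv φ s = 0} := by
    intro s hs
    have : φ =ᶠ[nhds s] fun _ => 0 := by
      filter_upwards [Ioi_mem_nhds hs] with s hs using h.h0 s (le_of_lt hs)
    simp [this.deriv_eq]
  have := closure_minimal hsub hcl
  rw [closure_Ioi] at this
  exact this ht

lemma Cut.dneg (h : Cut φ) (t : ℝ) : deriv φ t ≤ 0 := h.a.deriv_nonpos

lemma Cut.nonneg (h : Cut φ) (t : ℝ) : 0 ≤ φ t := by
  have := h.a (le_max_left t 1)
  rwa [h.h0 _ (le_max_right t 1)] at this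

lemma Cut.ww_nonneg (h : Cut φ) (z : E4) : 0 ≤ ww φ z := by
  have := h.dneg ‖z‖
  have h2 : 0 ≤ ‖z‖⁻¹ := by positivity
  unfold ww; nlinarith

lemma Cut.ww_zero (h : Cut φ) {z : E4} (hz : 1 ≤ ‖z‖) : ww φ z = 0 := by
  simp [ww, h.d0 hz]

lemma Cut.psi_zero (h : Cut φ) {z : E4} (hz : 1 ≤ ‖z‖) : psi φ z = 0 := h.h0 _ hz

lemma Cut.near (h : Cut φ) : ∀ᶠ z : E4 in nhds 0, ‖z‖ < 3/4 := by
  have : Metric.ball (0:E4) (3/4) ∈ nhds (0:E4) := Metric.ball_mem_nhds _ (by norm_num)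
  filter_upwards [this] with z hz
  simpa using hz

lemma Cut.ww_cont (h : Cut φ) : Continuous (ww φ) := by
  rw [continuous_iff_continuousAt]
  intro z
  by_cases hz : z = 0
  · subst hz
    have : ww φ =ᶠ[nhds 0] fun _ => 0 := by
      filter_upwards [h.near] with z hz
      simp [ww, h.d1 hz]
    exact continuousAt_const.congr this.symm
  · unfold ww
    have hn : ‖z‖ ≠ 0 := by simpa using hz
    exact ((continuous_norm.continuousAt.inv₀ hn).mul
      (h.cd.comp continuous_norm).continuousAt).neg

lemma Cut.psi_smooth (h : Cut φ) : ContDiff ℝ 1 (psi φ) := by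
  rw [contDiff_iff_contDiffAt]
  intro z
  by_cases hz : z = 0
  · subst hz
    have : psi φ =ᶠ[nhds 0] fun _ => 1 := by
      filter_upwards [h.near] with z hz
      exact h.h1 _ hz.le
    exact contDiffAt_const.congr_of_eventuallyEq this
  · exact ((h.s.of_le (by simp)).contDiffAt).comp z (contDiffAt_norm ℝ hz)

lemma Cut.psi_deriv (h : Cut φ) (z e : E4) : fderiv ℝ (psi φ) z e = - ww φ z * inner ℝ z e := by
  by_cases hz : z = 0
  · subst hz
    have : psi φ =ᶠ[nhds 0] fun _ => 1 := by
      filter_upwards [h.near] with z hz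
      exact h.h1 _ hz.le
    simp [this.fderiv_eq]
  · have h1 : HasDerivAt φ (deriv φ ‖z‖) ‖z‖ :=
      ((h.s.differentiable (by simp)) _).hasDerivAt
    have h2 : HasFDerivAt (fun z : E4 => ‖z‖) (‖z‖⁻¹ • innerSL ℝ z) z := by
      have h3 : HasFDerivAt (fun z : E4 => ‖z‖ ^ 2) (2 • innerSL ℝ z) z := 
        (hasStrictFDerivAt_norm_sq z).hasFDerivAt
      have h4 := h3.sqrt (by simpa using hz)
      simp only [Real.sqrt_sq (norm_nonneg _)] at h4
      have key : (1 / (2 * ‖z‖)) • 2 • innerSL ℝ z = ‖z‖⁻¹ • innerSL ℝ z := by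
        rw [← Nat.cast_smul_eq_nsmul ℝ, smul_smul]
        congr 1
        push_cast
        field_simp
      rw [← key]
      exact h4
    have h5 : HasFDerivAt (psi φ) (deriv φ ‖z‖ • (‖z‖⁻¹ • innerSL ℝ z)) z := h1.comp_hasFDerivAt z h2
    rw [h5.fderiv]
    simp [ww]; ring

lemma cs_of_zero {g : E4 → ℝ} (hg : ∀ z, 1 ≤ ‖z‖ → g z = 0) : HasCompactSupport g := by
  refine HasCompactSupport.intro (isCompact_closedBall (0:E4) 1) ?_
  intro z hz
  apply hg
  simp at hz
  exact hz.le

lemma intg {g : E4 → ℝ} (hc : Continuous g) (hg : ∀ z, 1 ≤ ‖z‖ → g z = 0) : Integrable g :=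
  hc.integrable_of_hasCompactSupport (cs_of_zero hg)

lemma fd_zero {g : E4 → ℝ} (hc : ContDiff ℝ 1 g) (hg : ∀ z, 1 ≤ ‖z‖ → g z = 0) (e : E4)
   : HasCompactSupport (fun z => fderiv ℝ g z e) := by
  have := (cs_of_zero hg).fderiv (𝕜 := ℝ)
  exact this.comp_left (g := fun L : E4 →L[ℝ] ℝ => L e) (by simp)

lemma ibp {f g : E4 → ℝ} (hf : ContDiff ℝ 1 f) (hg : ContDiff ℝ 1 g) (hz : ∀ z, 1 ≤ ‖z‖ → g z = 0)
    (e : E4) : ∫ z, f z * fderiv ℝ g z e = - ∫ z, fderiv ℝ f z e * g z := by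
  have hfc : Continuous (fun z => fderiv ℝ f z e) := (hf.continuous_fderiv (by simp)).clm_apply continuous_const
  have hgc : Continuous (fun z => fderiv ℝ g z e) := (hg.continuous_fderiv (by simp)).clm_apply continuous_const
  apply integral_mul_fderiv_eq_neg_fderiv_mul_of_integrable
  · exact intg (hfc.mul hg.continuous) (fun z h => by simp [hz z h])
  · exact (hf.continuous.mul hgc).integrable_of_hasCompactSupport ((fd_zero hg hz e).mul_left)
  · exact intg (hf.continuous.mul hg.continuous) (fun z h => by simp [hz z h])
  · intro x _; exact hf.differentiable (by simp) x
  · intro x _; exact hg.differentiable (by simp) x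

lemma inner_ee (z : E4) (i : Fin 4) : inner ℝ z (ee i) = z i := by
  simp [ee, EuclideanSpace.inner_single_right]

lemma sum_ee (z : E4) : ∑ i, z i • ee i = z := by
  ext j
  simp [ee, Pi.single_apply]

lemma clm_sum {G : Type*} [NormedAddCommGroup G] [NormedSpace ℝ G] (L : E4 →L[ℝ] G) (z : E4) :
    L z = ∑ i, z i • L (ee i) := by
  conv_lhs => rw [← sum_ee z]
  simp

lemma sum_sq (z : E4) : ∑ i, z i * z i = ‖z‖ ^ 2 := by
  rw [EuclideanSpace.norm_sq_eq]; simp [sq]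

/-- integral of Laplacian -/
lemma ibp_lap (h : Cut φ) {f : E4 → ℝ} (hf : ContDiff ℝ 2 f) :
    ∫ z, fderiv ℝ f z z * ww φ z =
      ∫ z, (∑ i, fderiv ℝ (fun y => fderiv ℝ f y (ee i)) z (ee i)) * psi φ z := by
  have hfi : ∀ i, ContDiff ℝ 1 (fun y => fderiv ℝ f y (ee i)) := fun i =>
    (hf.fderiv_right (m := 1) (by norm_num)).clm_apply contDiff_const
  have e1 : ∀ z, fderiv ℝ f z z * ww φ z = ∑ i, -(fderiv ℝ f z (ee i) * fderiv ℝ (psi φ) z (ee i)) := by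
    intro z
    rw [clm_sum (fderiv ℝ f z) z, Finset.sum_mul]
    refine Finset.sum_congr rfl fun i _ => ?_
    rw [h.psi_deriv, inner_ee]; simp; ring
  simp_rw [e1, Finset.sum_mul]
  have hps : ∀ i, Continuous (fun z => fderiv ℝ (psi φ) z (ee i)) := fun i =>
    (h.psi_smooth.continuous_fderiv (by simp)).clm_apply continuous_const
  rw [integral_finsetSum, integral_finsetSum]
  · refine Finset.sum_congr rfl fun i _ => ?_
    rw [integral_neg, ibp (hfi i) h.psi_smooth (fun z hz => h.psi_zero hz) (ee i), neg_neg]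
  · intro i _
    refine intg ((((hfi i).continuous_fderiv (by simp)).clm_apply continuous_const).mul h.psi_smooth.continuous) ?_
    intro z hz; simp [h.psi_zero hz]
  · intro i _
    refine (intg ((hfi i).continuous.mul (hps i)) ?_).neg
    intro z hz; simp [h.psi_deriv, h.ww_zero hz]

lemma ibp_radial (h : Cut φ) {f : E4 → ℝ} (hf : ContDiff ℝ 1 f) :
    ∫ z, f z * ‖z‖ ^ 2 * ww φ z = ∫ z, (fderiv ℝ f z z + 4 * f z) * psi φ z := by
  have hco : ∀ i : Fin 4, ContDiff ℝ 1 (fun z : E4 => z i) := fun i => by fun_prop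
  have hfi : ∀ i : Fin 4, ContDiff ℝ 1 (fun y : E4 => f y * y i) := fun i => hf.mul (hco i)
  have hd : ∀ (i : Fin 4) (z : E4), fderiv ℝ (fun y : E4 => f y * y i) z (ee i)
      = z i * fderiv ℝ f z (ee i) + f z := by
    intro i z
    have h1 : HasFDerivAt (fun y : E4 => y i) (EuclideanSpace.proj i : E4 →L[ℝ] ℝ) z :=
      (EuclideanSpace.proj i : E4 →L[ℝ] ℝ).hasFDerivAt
    have h2 := (hf.differentiable (by simp) z).hasFDerivAt.mul h1
    have h3 : fderiv ℝ (fun y : E4 => f y * y i) z = _ := h2.fderiv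
    rw [h3]
    simp [ee]; ring
  have e1 : ∀ z, f z * ‖z‖ ^ 2 * ww φ z = ∑ i, -((f z * z i) * fderiv ℝ (psi φ) z (ee i)) := by
    intro z
    rw [← sum_sq, Finset.mul_sum, Finset.sum_mul]
    refine Finset.sum_congr rfl fun i _ => ?_
    rw [h.psi_deriv, inner_ee]; ring
  have e2 : ∀ z, (fderiv ℝ f z z + 4 * f z) * psi φ z
      = ∑ i, fderiv ℝ (fun y : E4 => f y * y i) z (ee i) * psi φ z := by
    intro z
    rw [← Finset.sum_mul]
    simp_rw [hd]
    rw [clm_sum (fderiv ℝ f z) z, Finset.sum_add_distrib]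
    simp
  simp_rw [e1, e2]
  have hps : ∀ i, Continuous (fun z => fderiv ℝ (psi φ) z (ee i)) := fun i =>
    (h.psi_smooth.continuous_fderiv (by simp)).clm_apply continuous_const
  rw [integral_finsetSum, integral_finsetSum]
  · refine Finset.sum_congr rfl fun i _ => ?_
    rw [integral_neg, ibp (hfi i) h.psi_smooth (fun z hz => h.psi_zero hz) (ee i), neg_neg]
  · intro i _
    refine intg ((((hfi i).continuous_fderiv (by simp)).clm_apply continuous_const).mul h.psi_smooth.continuous) ?_
    intro z hz; simp [h.psi_zero hz]
  · intro i _
    refine (intg ((hfi i).continuous.mul (hps i)) ?_).neg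
    intro z hz; simp [h.psi_deriv, h.ww_zero hz]


variable {G : Type*} [NormedAddCommGroup G] [InnerProductSpace ℝ G]

def lap (V : E4 → G) (z : E4) : G := ∑ i, fderiv ℝ (fun y => fderiv ℝ V y (ee i)) z (ee i)

lemma nsq_deriv {V : E4 → G} (hV : ContDiff ℝ 2 V) (z e : E4) :
    fderiv ℝ (fun y => ‖V y‖ ^ 2) z e = 2 * inner ℝ (V z) (fderiv ℝ V z e) := by
  have h1 := (hV.differentiable (by simp) z).hasFDerivAt.norm_sq
  rw [h1.fderiv]
  simp

lemma nsq_lap {V : E4 → G} (hV : ContDiff ℝ 2 V) (z : E4) :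
    ∑ i, fderiv ℝ (fun y => fderiv ℝ (fun y => ‖V y‖ ^ 2) y (ee i)) z (ee i)
      = 2 * gradSq V z + 2 * inner ℝ (V z) (lap V z) := by
  have hVi : ∀ i, ContDiff ℝ 1 (fun y => fderiv ℝ V y (ee i)) := fun i =>
    (hV.fderiv_right (m := 1) (by norm_num)).clm_apply contDiff_const
  simp_rw [nsq_deriv hV]
  unfold lap gradSq
  rw [inner_sum, Finset.mul_sum, Finset.mul_sum, ← Finset.sum_add_distrib]
  refine Finset.sum_congr rfl fun i _ => ?_
  have h1 := (hV.differentiable (by simp) z).hasFDerivAt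
  have h2 := ((hVi i).differentiable (by simp) z).hasFDerivAt
  have h3 := (h1.inner ℝ h2).const_mul 2
  rw [h3.fderiv]
  simp [fderivInnerCLM_apply]
  change _ = 2 * ‖fderiv ℝ V z (ee i)‖ ^ 2 + _
  rw [← real_inner_self_eq_norm_sq]
  ring

lemma gradSq_cont {V : E4 → G} (hV : ContDiff ℝ 2 V) : Continuous (gradSq V) := by
  unfold gradSq
  refine continuous_finsetSum _ fun i _ => ?_
  exact (((hV.continuous_fderiv (by simp)).clm_apply continuous_const).norm).pow 2

lemma gradSq_nonneg (V : E4 → G) (z : E4) : 0 ≤ gradSq V z :=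
  Finset.sum_nonneg fun i _ => by positivity

lemma B1 (h : Cut φ) {V : E4 → G} (hV : ContDiff ℝ 2 V) (hl : ∀ z, ‖z‖ < 1 → lap V z = 0) :
    ∫ z, fderiv ℝ (fun y => ‖V y‖ ^ 2) z z * ww φ z = 2 * ∫ z, gradSq V z * psi φ z := by
  rw [ibp_lap h (hV.norm_sq ℝ), ← integral_const_mul]
  congr 1
  ext z
  rw [nsq_lap hV]
  by_cases hz : ‖z‖ < 1
  · rw [hl z hz]; simp; ring
  · rw [h.psi_zero (not_lt.1 hz)]; simp

lemma fderiv_le (V : E4 → G) (z : E4) : ‖fderiv ℝ V z z‖ ^ 2 ≤ ‖z‖ ^ 2 * gradSq V z := by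
  rw [clm_sum (fderiv ℝ V z) z]
  have h1 : ‖∑ i, z i • fderiv ℝ V z (ee i)‖ ≤ ∑ i, |z i| * ‖fderiv ℝ V z (ee i)‖ := by
    refine (norm_sum_le _ _).trans (le_of_eq ?_)
    simp [norm_smul]
  have h2 := Finset.sum_mul_sq_le_sq_mul_sq Finset.univ (fun i => |z i|)
    (fun i => ‖fderiv ℝ V z (ee i)‖)
  have h3 : ∑ i, |z i| ^ 2 = ‖z‖ ^ 2 := by rw [← sum_sq]; simp [sq]
  rw [h3] at h2
  exact (pow_le_pow_left₀ (norm_nonneg _) h1 2).trans h2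

lemma B2 (h : Cut φ) {V : E4 → G} (hV : ContDiff ℝ 2 V) :
    3 * ∫ z, ‖V z‖ ^ 2 * psi φ z ≤ (∫ z, gradSq V z * psi φ z) + ∫ z, ‖V z‖ ^ 2 * ww φ z := by
  have hF : ContDiff ℝ 1 (fun z => ‖V z‖ ^ 2) := (hV.norm_sq ℝ).of_le (by norm_num)
  have hpc := h.psi_smooth.continuous
  have hc : Continuous (fun z => fderiv ℝ (fun z => ‖V z‖ ^ 2) z z) :=
    (hF.continuous_fderiv (by simp)).clm_apply continuous_id
  have i1 : Integrable (fun z => ‖V z‖ ^ 2 * psi φ z) :=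
    intg (hF.continuous.mul hpc) (fun z hz => by simp [h.psi_zero hz])
  have i2 : Integrable (fun z => gradSq V z * psi φ z) :=
    intg ((gradSq_cont hV).mul hpc) (fun z hz => by simp [h.psi_zero hz])
  have i3 : Integrable (fun z => ‖V z‖ ^ 2 * ww φ z) :=
    intg (hF.continuous.mul h.ww_cont) (fun z hz => by simp [h.ww_zero hz])
  have i4 : Integrable (fun z => ‖V z‖ ^ 2 * ‖z‖ ^ 2 * ww φ z) :=
    intg ((hF.continuous.mul (continuous_norm.pow 2)).mul h.ww_cont)
      (fun z hz => by simp [h.ww_zero hz])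
  have i5 : Integrable (fun z => (fderiv ℝ (fun z => ‖V z‖ ^ 2) z z + 4 * ‖V z‖ ^ 2) * psi φ z) :=
    intg ((hc.add (continuous_const.mul hF.continuous)).mul hpc)
      (fun z hz => by simp [h.psi_zero hz])
  have e1 := ibp_radial h hF
  have l1 : ∫ z, ‖V z‖ ^ 2 * ‖z‖ ^ 2 * ww φ z ≤ ∫ z, ‖V z‖ ^ 2 * ww φ z := by
    refine integral_mono i4 i3 fun z => ?_
    dsimp only
    by_cases hz : ‖z‖ < 1
    · have : ‖z‖ ^ 2 ≤ 1 := pow_le_one₀ (norm_nonneg _) hz.le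
      refine mul_le_mul_of_nonneg_right ?_ (h.ww_nonneg z)
      nlinarith [sq_nonneg ‖V z‖]
    · simp [h.ww_zero (not_lt.1 hz)]
  have l2 : ∫ z, (3 * (‖V z‖ ^ 2 * psi φ z) - gradSq V z * psi φ z) ≤
      ∫ z, (fderiv ℝ (fun z => ‖V z‖ ^ 2) z z + 4 * ‖V z‖ ^ 2) * psi φ z := by
    refine integral_mono ((i1.const_mul 3).sub i2) i5 fun z => ?_
    dsimp only
    by_cases hz : ‖z‖ < 1
    · have hp : 0 ≤ psi φ z := h.nonneg _
      rw [nsq_deriv hV]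
      have a1 := abs_real_inner_le_norm (V z) (fderiv ℝ V z z)
      have a2 := fderiv_le V z
      have a3 : ‖z‖ ^ 2 ≤ 1 := pow_le_one₀ (norm_nonneg _) hz.le
      have a4 := (abs_le.1 a1).1
      have a5 := gradSq_nonneg V z
      have : 3 * ‖V z‖ ^ 2 - gradSq V z ≤
        2 * inner ℝ (V z) (fderiv ℝ V z z) + 4 * ‖V z‖ ^ 2 := by
        nlinarith [sq_nonneg (‖V z‖ - ‖fderiv ℝ V z z‖)]
      nlinarith
    · simp [h.psi_zero (not_lt.1 hz)]
  rw [integral_sub (i1.const_mul 3) i2, integral_const_mul] at l2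
  linarith

lemma B3 (h : Cut φ) {f : E4 → ℝ} (hf : ContDiff ℝ 1 f) (x : E4) (t : ℝ) :
    HasDerivAt (fun s : ℝ => ∫ z, f (x + s • z) * ww φ z)
      (∫ z, fderiv ℝ f (x + t • z) z * ww φ z) t := by
  have hc : Continuous (fun p : ℝ × E4 => fderiv ℝ f (x + p.1 • p.2) p.2 * ww φ p.2) := by
    refine Continuous.mul ?_ (h.ww_cont.comp continuous_snd)
    exact ((hf.continuous_fderiv (by simp)).comp (by fun_prop)).clm_apply continuous_snd
  have hK : IsCompact (closedBall t 1 ×ˢ closedBall (0:E4) 1) :=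
    (isCompact_closedBall _ _).prod (isCompact_closedBall _ _)
  obtain ⟨C, hC⟩ := hK.exists_bound_of_continuousOn hc.continuousOn
  have hfs : ∀ s : ℝ, Continuous (fun z => f (x + s • z) * ww φ z) := fun s =>
    (hf.continuous.comp (by fun_prop)).mul h.ww_cont
  refine (hasDerivAt_integral_of_dominated_loc_of_deriv_le (s := ball t 1)
    (F := fun s z => f (x + s • z) * ww φ z)
    (F' := fun s z => fderiv ℝ f (x + s • z) z * ww φ z)
    (bound := (closedBall (0:E4) 1).indicator (fun _ => C))
    (ball_mem_nhds _ one_pos) ?_ ?_ ?_ ?_ ?_ ?_).2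
  · exact Filter.Eventually.of_forall fun s => (hfs s).aestronglyMeasurable
  · exact intg (hfs t) (fun z hz => by simp [h.ww_zero hz])
  · exact (hc.comp (by fun_prop : Continuous fun z : E4 => (t, z))).aestronglyMeasurable
  · refine Filter.Eventually.of_forall fun z s hs => ?_
    by_cases hz : ‖z‖ ≤ 1
    · have hz' : z ∈ closedBall (0:E4) 1 := by simpa using hz
      rw [Set.indicator_of_mem hz']
      exact hC (s, z) ⟨ball_subset_closedBall hs, hz'⟩
    · have hz' : z ∉ closedBall (0:E4) 1 := by simpa using hz
      rw [Set.indicator_of_notMem hz', h.ww_zero (not_le.1 hz).le]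
      simp
  · rw [integrable_indicator_iff measurableSet_closedBall]
    exact integrableOn_const (measure_closedBall_lt_top.ne)
  · refine Filter.Eventually.of_forall fun z s hs => ?_
    have h1 : HasDerivAt (fun s : ℝ => x + s • z) z s := by
      simpa using ((hasDerivAt_id s).smul_const z).const_add x
    have h2 := (hf.differentiable (by simp) (x + s • z)).hasFDerivAt.comp_hasDerivAt s h1
    exact h2.mul_const _


lemma fderiv_scale {W : Type*} [NormedAddCommGroup W] [NormedSpace ℝ W] {f : E4 → W}
    (hf : Differentiable ℝ f) (x : E4) (t : ℝ) (z e : E4) :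
    fderiv ℝ (fun z => f (x + t • z)) z e = t • fderiv ℝ f (x + t • z) e := by
  have h1 : HasFDerivAt (fun z : E4 => x + t • z) (t • ContinuousLinearMap.id ℝ E4) z :=
    ((hasFDerivAt_id z).const_smul t).const_add x
  have h2 : HasFDerivAt (fun z => f (x + t • z)) _ z :=
    (hf (x + t • z)).hasFDerivAt.comp z h1
  rw [h2.fderiv]
  simp

lemma gradSq_scale {v : E4 → G} (hv : ContDiff ℝ 2 v) (x : E4) (t : ℝ) (z : E4) :
    gradSq (fun z => v (x + t • z)) z = t ^ 2 * gradSq v (x + t • z) := by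
  unfold gradSq
  simp_rw [fderiv_scale (hv.differentiable (by simp)), norm_smul, mul_pow]
  rw [Finset.mul_sum]
  simp

lemma lap_scale {v : E4 → G} (hv : ContDiff ℝ 2 v) (x : E4) (t : ℝ) (z : E4) :
    lap (fun z => v (x + t • z)) z = t ^ 2 • lap v (x + t • z) := by
  unfold lap
  simp_rw [fderiv_scale (hv.differentiable (by simp))]
  rw [Finset.smul_sum]
  refine Finset.sum_congr rfl fun i _ => ?_
  have hVi : ContDiff ℝ 1 (fun y => fderiv ℝ v y (ee i)) :=
    (hv.fderiv_right (m := 1) (by norm_num)).clm_apply contDiff_const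
  have hd : Differentiable ℝ (fun y => t • fderiv ℝ v y (ee i)) :=
    (hVi.differentiable (by simp)).const_smul t
  rw [fderiv_scale (f := fun y => t • fderiv ℝ v y (ee i)) hd]
  have := ((hVi.differentiable (by simp) (x + t • z)).hasFDerivAt.const_smul t).fderiv
  have h2 : fderiv ℝ (fun y => t • fderiv ℝ v y (ee i)) (x + t • z)
    = t • fderiv ℝ (fun y => fderiv ℝ v y (ee i)) (x + t • z) := this
  rw [h2]
  simp [smul_smul, sq]

lemma cov (F : E4 → ℝ) (x : E4) {t : ℝ} (ht : 0 < t) :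
    ∫ y, F y = t ^ 4 * ∫ z, F (x + t • z) := by
  have h1 := Measure.integral_comp_smul (volume : Measure E4) (fun z => F (x + z)) t
  rw [integral_add_left_eq_self] at h1
  rw [h1]
  simp
  rw [abs_of_pos ht]
  field_simp

lemma norm_scale (x z : E4) {t : ℝ} (ht : 0 < t) : ‖x + t • z - x‖ = t * ‖z‖ := by
  rw [add_sub_cancel_left, norm_smul, Real.norm_of_nonneg ht.le]

lemma H_scale (v : E4 → G) (x : E4) {t : ℝ} (ht : 0 < t) :
    Hphi φ v x t = t ^ 3 * ∫ z, ‖v (x + t • z)‖ ^ 2 * ww φ z := by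
  unfold Hphi
  rw [cov _ x ht, ← mul_neg, ← integral_neg, ← integral_const_mul, ← integral_const_mul]
  congr 1
  ext z
  rw [norm_scale x z ht, mul_div_cancel_left₀ _ ht.ne']
  unfold ww
  rw [mul_inv]
  field_simp

lemma D_scale {v : E4 → G} (hv : ContDiff ℝ 2 v) (x : E4) {t : ℝ} (ht : 0 < t) :
    Dphi φ v x t = t ^ 2 * ∫ z, gradSq (fun z => v (x + t • z)) z * psi φ z := by
  unfold Dphi
  rw [cov _ x ht, ← integral_const_mul, ← integral_const_mul]
  congr 1
  ext z
  rw [norm_scale x z ht, mul_div_cancel_left₀ _ ht.ne', gradSq_scale hv]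
  unfold psi
  ring

lemma M_scale (v : E4 → G) (x : E4) {t : ℝ} (ht : 0 < t) :
    ∫ y, ‖v y‖ ^ 2 * φ (‖y - x‖ / t) = t ^ 4 * ∫ z, ‖v (x + t • z)‖ ^ 2 * psi φ z := by
  rw [cov _ x ht]
  congr 2
  ext z
  rw [norm_scale x z ht, mul_div_cancel_left₀ _ ht.ne']
  rfl

lemma smooth_scale {v : E4 → G} (hv : ContDiff ℝ 2 v) (x : E4) (t : ℝ) :
    ContDiff ℝ 2 (fun z => v (x + t • z)) := hv.comp (by fun_prop)

lemma H_deriv (h : Cut φ) {v : E4 → G} (hv : ContDiff ℝ 2 v) (x : E4) {t : ℝ} (ht : 0 < t)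
    (hl : ∀ y ∈ ball x t, lap v y = 0) :
    HasDerivAt (fun s : ℝ => ∫ z, ‖v (x + s • z)‖ ^ 2 * ww φ z) (2 * (t⁻¹) ^ 3 * Dphi φ v x t) t := by
  have hF : ContDiff ℝ 1 (fun z => ‖v z‖ ^ 2) := (hv.norm_sq ℝ).of_le (by norm_num)
  have h3 := B3 h hF x t
  convert h3 using 1
  have hl' : ∀ z, ‖z‖ < 1 → lap (fun z => v (x + t • z)) z = 0 := by
    intro z hz
    rw [lap_scale hv, hl, smul_zero]
    rw [mem_ball, dist_eq_norm, norm_scale x z ht]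
    nlinarith
  have h1 := B1 h (smooth_scale hv x t) hl'
  have h2 : ∀ z, fderiv ℝ (fun y => ‖v (x + t • y)‖ ^ 2) z z =
      t * fderiv ℝ (fun y => ‖v y‖ ^ 2) (x + t • z) z := fun z =>
    fderiv_scale (f := fun y => ‖v y‖ ^ 2) (hF.differentiable (by simp)) x t z z
  simp_rw [h2, mul_assoc] at h1
  rw [integral_const_mul] at h1
  rw [D_scale hv x ht]
  field_simp
  rw [← h1]

lemma M_le (h : Cut φ) {v : E4 → G} (hv : ContDiff ℝ 2 v) (x : E4) {t : ℝ} (ht : 0 < t) :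
    3 * ∫ y, ‖v y‖ ^ 2 * φ (‖y - x‖ / t) ≤ t ^ 2 * Dphi φ v x t + t * Hphi φ v x t := by
  have := B2 h (smooth_scale hv x t)
  rw [D_scale hv x ht, H_scale v x ht, M_scale v x ht]
  have := mul_le_mul_of_nonneg_left this (by positivity : 0 ≤ t ^ 4)
  linarith

lemma growth (h : Cut φ) {v : E4 → G} (hv : ContDiff ℝ 2 v) (x : E4) {r Λ : ℝ} (hr : 0 < r)
    (hl : ∀ y ∈ ball x (4 / 3 * r), lap v y = 0)
    (hΛ : 0 < Λ)
    (hN : ∀ t ∈ Set.Icc r (4 / 3 * r), 0 < Hphi φ v x t ∧ t * Dphi φ v x t ≤ Λ * Hphi φ v x t) :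
    Hphi φ v x (4 / 3 * r) ≤ (4 / 3) ^ 3 * Real.exp (2 * Λ / 3) * Hphi φ v x r := by
  set hh : ℝ → ℝ := fun s : ℝ => ∫ z, ‖v (x + s • z)‖ ^ 2 * ww φ z with hhdef
  have hH : ∀ t, 0 < t → Hphi φ v x t = t ^ 3 * hh t := fun t ht => H_scale v x ht
  have hd : ∀ t ∈ Set.Icc r (4 / 3 * r), HasDerivAt hh (2 * (t⁻¹) ^ 3 * Dphi φ v x t) t := by
    intro t ht
    exact H_deriv h hv x (hr.trans_le ht.1) (fun y hy => hl y (ball_subset_ball ht.2 hy))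
  let k : ℝ → ℝ := fun t => hh t * Real.exp (-(2 * Λ / r * t))
  have hk : ∀ t ∈ Set.Icc r (4 / 3 * r), HasDerivAt k
      (2 * (t⁻¹) ^ 3 * Dphi φ v x t * Real.exp (-(2 * Λ / r * t)) +
        hh t * (Real.exp (-(2 * Λ / r * t)) * (-(2 * Λ / r * 1)))) t := by
    intro t ht
    exact (hd t ht).mul ((((hasDerivAt_id t).const_mul (2 * Λ / r)).neg).exp)
  have hanti : AntitoneOn k (Set.Icc r (4 / 3 * r)) := by
    refine antitoneOn_of_deriv_nonpos (convex_Icc _ _)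
      (fun t ht => (hk t ht).continuousAt.continuousWithinAt)
      (fun t ht => (hk t (interior_subset ht)).differentiableAt.differentiableWithinAt) ?_
    intro t ht
    have ht := interior_subset ht
    have tpos : 0 < t := hr.trans_le ht.1
    rw [(hk t ht).deriv]
    obtain ⟨p, q⟩ := hN t ht
    rw [hH t tpos] at p q
    have hp : 0 < hh t := by
      by_contra hc
      have : t ^ 3 * hh t ≤ 0 := mul_nonpos_of_nonneg_of_nonpos (by positivity) (not_lt.1 hc)
      linarith
    have key : 2 * (t⁻¹) ^ 3 * Dphi φ v x t ≤ 2 * Λ / r * hh t := by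
      have q1 : 2 * (t⁻¹) ^ 3 * Dphi φ v x t ≤ 2 * Λ / t * hh t := by
        have := mul_le_mul_of_nonneg_left q (by positivity : 0 ≤ 2 * (t⁻¹) ^ 4)
        calc _ = 2 * (t⁻¹) ^ 4 * (t * Dphi φ v x t) := by field_simp
          _ ≤ _ := this
          _ = _ := by field_simp
      refine q1.trans (mul_le_mul_of_nonneg_right ?_ hp.le)
      exact div_le_div_of_nonneg_left (by positivity) hr ht.1
    have := mul_le_mul_of_nonneg_right key (Real.exp_pos (-(2 * Λ / r * t))).le
    nlinarith
  have hle : r ≤ 4 / 3 * r := by linarith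
  have := hanti (Set.left_mem_Icc.2 hle) (Set.right_mem_Icc.2 hle) hle
  have e1 : 2 * Λ / r * (4 / 3 * r) = 8 * Λ / 3 := by field_simp; norm_num
  have e2 : 2 * Λ / r * r = 2 * Λ := by field_simp
  simp only [k, e1, e2] at this
  rw [hH _ (by positivity), hH r hr]
  have h3 : hh (4 / 3 * r) ≤ Real.exp (2 * Λ / 3) * hh r := by
    have := mul_le_mul_of_nonneg_right this (Real.exp_pos (8 * Λ / 3)).le
    rw [mul_assoc, mul_assoc, ← Real.exp_add, ← Real.exp_add] at this
    have e3 : -(8 * Λ / 3) + 8 * Λ / 3 = 0 := by ring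
    have e4 : -(2 * Λ) + 8 * Λ / 3 = 2 * Λ / 3 := by ring
    rw [e3, e4, Real.exp_zero] at this
    linarith
  have := mul_le_mul_of_nonneg_left h3 (by positivity : 0 ≤ (4 / 3 * r) ^ 3)
  linarith

lemma ball_le (h : Cut φ) {g : E4 → ℝ} (hg : Continuous g) (h0 : ∀ y, 0 ≤ g y) (x : E4) {r : ℝ}
    (hr : 0 < r) : ∫ y in ball x r, g y ≤ ∫ y, g y * φ (‖y - x‖ / (4 / 3 * r)) := by
  rw [← integral_indicator measurableSet_ball]
  have hgi : Integrable (fun y => g y * φ (‖y - x‖ / (4 / 3 * r))) := by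
    refine (hg.mul (h.s.continuous.comp (by fun_prop))).integrable_of_hasCompactSupport ?_
    refine HasCompactSupport.intro (isCompact_closedBall x (4 / 3 * r)) fun y hy => ?_
    rw [mem_closedBall, dist_eq_norm, not_le] at hy
    change g y * φ _ = 0
    rw [h.h0 _ ((one_le_div (by positivity)).2 hy.le), mul_zero]
  refine integral_mono_of_nonneg (Filter.Eventually.of_forall fun y => ?_) hgi
    (Filter.Eventually.of_forall fun y => ?_)
  · exact Set.indicator_nonneg (fun y _ => h0 y) y
  · dsimp only
    by_cases hy : y ∈ ball x r
    · rw [Set.indicator_of_mem hy, h.h1, mul_one]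
      rw [mem_ball, dist_eq_norm] at hy
      rw [div_le_iff₀ (by positivity)]
      linarith
    · rw [Set.indicator_of_notMem hy]
      exact mul_nonneg (h0 y) (h.nonneg _)

lemma main_v (h : Cut φ) {v : E4 → G} (hv : ContDiff ℝ 2 v) (x : E4) {r Λ : ℝ} (hr : 0 < r)
    (hl : ∀ y ∈ ball x (4 / 3 * r), lap v y = 0)
    (hΛ : 0 < Λ)
    (hN : ∀ t ∈ Set.Icc r (4 / 3 * r), 0 < Hphi φ v x t ∧ t * Dphi φ v x t ≤ Λ * Hphi φ v x t)
    {C : ℝ} (hC : C = (Λ + 1) * ((4 / 3) ^ 3 * Real.exp (2 * Λ / 3))) :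
      (∫ y in ball x r, ‖v y‖ ^ 2) ≤ C * r * Hphi φ v x r ∧
      (∫ y in ball x r, ‖v y‖ * Real.sqrt (gradSq v y)) ≤ C * Hphi φ v x r ∧
      (∫ y in ball x r, gradSq v y) ≤ C * r⁻¹ * Hphi φ v x r := by
  have hgr := growth h hv x hr hl hΛ hN
  set K := (4 / 3) ^ 3 * Real.exp (2 * Λ / 3)
  have hle : r ≤ 4 / 3 * r := by linarith
  obtain ⟨p, q⟩ := hN _ (Set.right_mem_Icc.2 hle)
  have tpos : 0 < 4 / 3 * r := by positivity
  have hM := M_le h hv x tpos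
  have b1 := ball_le h (g := fun y => ‖v y‖ ^ 2) (hv.continuous.norm.pow 2) (fun y => by positivity) x hr
  have b3 := ball_le h (gradSq_cont hv) (gradSq_nonneg v) x hr
  change _ ≤ Dphi φ v x (4 / 3 * r) at b3
  have hK : (Λ + 1) * Hphi φ v x (4 / 3 * r) ≤ C * Hphi φ v x r := by
    rw [hC, mul_assoc]
    exact mul_le_mul_of_nonneg_left hgr (by linarith)
  have c1 : (∫ y in ball x r, ‖v y‖ ^ 2) ≤ C * r * Hphi φ v x r := by
    have := mul_le_mul_of_nonneg_left hK hr.le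
    have := mul_le_mul_of_nonneg_left q tpos.le
    have := mul_pos (mul_pos hr (by linarith : 0 < Λ + 1)) p
    nlinarith
  have c3 : (∫ y in ball x r, gradSq v y) ≤ C * r⁻¹ * Hphi φ v x r := by
    have e : C * r⁻¹ * Hphi φ v x r = (C * Hphi φ v x r) / r := by field_simp
    rw [e, le_div_iff₀ hr]
    have := mul_le_mul_of_nonneg_right b3 hr.le
    have : 0 ≤ ∫ y in ball x r, gradSq v y := integral_nonneg (gradSq_nonneg v)
    nlinarith
  refine ⟨c1, ?_, c3⟩
  have io : ∀ g : E4 → ℝ, Continuous g → IntegrableOn g (ball x r) := fun g hg =>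
    (hg.continuousOn.integrableOn_compact (isCompact_closedBall x r)).mono_set ball_subset_closedBall
  have i1 := io (fun y => ‖v y‖ ^ 2) (hv.continuous.norm.pow 2)
  have i2 := io _ (gradSq_cont hv)
  have i3 := io (fun y => ‖v y‖ * Real.sqrt (gradSq v y))
    (hv.continuous.norm.mul (gradSq_cont hv).sqrt)
  have l : ∫ y in ball x r, ‖v y‖ * Real.sqrt (gradSq v y) ≤
      ∫ y in ball x r, ((2 * r)⁻¹ * ‖v y‖ ^ 2 + (r / 2) * gradSq v y) := by
    refine integral_mono i3 ((i1.const_mul _).add (i2.const_mul _)) fun y => ?_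
    dsimp only
    have hs := Real.sq_sqrt (gradSq_nonneg v y)
    set s := Real.sqrt (gradSq v y)
    rw [← hs]
    have : 0 ≤ (2 * r)⁻¹ * (‖v y‖ - r * s) ^ 2 := by positivity
    have e : (2 * r)⁻¹ * (‖v y‖ - r * s) ^ 2 =
      (2 * r)⁻¹ * ‖v y‖ ^ 2 + (r / 2) * s ^ 2 - ‖v y‖ * s := by field_simp; ring
    linarith
  rw [integral_add (i1.const_mul _) (i2.const_mul _), integral_const_mul, integral_const_mul] at l
  refine l.trans ?_
  have d1 := mul_le_mul_of_nonneg_left c1 (by positivity : 0 ≤ (2 * r)⁻¹)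
  have d2 := mul_le_mul_of_nonneg_left c3 (by positivity : 0 ≤ r / 2)
  refine (add_le_add d1 d2).trans (le_of_eq ?_)
  field_simp
  ring

end S16


/-- Flat-case analogue of Lemma 4.3: `∫_{B_x(r)} |u|²`, `∫_{B_x(r)} |u||∇u|` and
`∫_{B_x(r)} |∇u|²` are controlled by `H_φ(x,r)`, with constant depending only
on `φ` and `Λ`. -/
theorem stmt_16 (φ : ℝ → ℝ) (hφs : ContDiff ℝ (⊤ : ℕ∞) φ) (hφa : Antitone φ)
    (hφ1 : ∀ t ≤ (3/4 : ℝ), φ t = 1) (hφ0 : ∀ t, (1:ℝ) ≤ t → φ t = 0)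
    (Λ : ℝ) (hΛ : 0 < Λ) :
    ∃ C > (0:ℝ),
      ∀ (F : Type) [NormedAddCommGroup F] [InnerProductSpace ℝ F] [FiniteDimensional ℝ F],
      ∀ (u : E4 → F) (Ω : Set E4), IsOpen Ω → IsHarmonicOn u Ω →
      ∀ (x : E4) (r : ℝ), 0 < r → closedBall x (2 * r) ⊆ Ω →
      (∀ t ∈ Set.Ioc (0:ℝ) (2 * r), 0 < Hphi φ u x t ∧ Nphi φ u x t ≤ Λ) →
      (∫ y in ball x r, ‖u y‖ ^ 2) ≤ C * r * Hphi φ u x r ∧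
      (∫ y in ball x r, ‖u y‖ * Real.sqrt (gradSq u y)) ≤ C * Hphi φ u x r ∧
      (∫ y in ball x r, gradSq u y) ≤ C * r⁻¹ * Hphi φ u x r := by
  have h : S16.Cut φ := ⟨hφs, hφa, hφ1, hφ0⟩
  refine ⟨(Λ + 1) * ((4 / 3) ^ 3 * Real.exp (2 * Λ / 3)), by positivity, ?_⟩
  intro F _ _ _ u Ω hΩ hu x r hr hsub hyp
  let χ : ContDiffBump x := ⟨3 / 2 * r, 2 * r, by positivity, by linarith⟩
  let v : E4 → F := fun y => χ y • u y
  have huv : ∀ y ∈ ball x (3 / 2 * r), v =ᶠ[nhds y] u := by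
    intro y hy
    filter_upwards [isOpen_ball.mem_nhds hy] with z hz
    have : χ z = 1 := χ.one_of_mem_closedBall (ball_subset_closedBall hz)
    simp [v, this]
  have hv : ContDiff ℝ 2 v := by
    rw [contDiff_iff_contDiffAt]
    intro y
    by_cases hy : y ∈ closedBall x (2 * r)
    · have := (hu.1.contDiffAt (hΩ.mem_nhds (hsub hy))).of_le (m := 2) (by norm_cast)
      exact (χ.contDiff.contDiffAt).smul this
    · have : v =ᶠ[nhds y] fun _ => 0 := by
        filter_upwards [isClosed_closedBall.isOpen_compl.mem_nhds hy] with z hz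
        have hz' : 2 * r < dist z x := by simpa using hz
        have : χ z = 0 := χ.zero_of_le_dist hz'.le
        simp [v, this]
      exact contDiffAt_const.congr_of_eventuallyEq this
  have hnorm : ∀ y ∈ ball x (3 / 2 * r), v y = u y := fun y hy => (huv y hy).eq_of_nhds
  have hgrad : ∀ y ∈ ball x (3 / 2 * r), gradSq v y = gradSq u y := by
    intro y hy
    simp only [gradSq, (huv y hy).fderiv_eq]
  have hl : ∀ y ∈ ball x (4 / 3 * r), S16.lap v y = 0 := by
    intro y hy
    have hy' : y ∈ ball x (3 / 2 * r) := ball_subset_ball (by linarith) hy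
    have hyΩ : y ∈ Ω := hsub (ball_subset_closedBall (ball_subset_ball (by linarith) hy))
    have h2 := hu.2 y hyΩ
    rw [← h2]
    unfold S16.lap
    refine Finset.sum_congr rfl fun i _ => ?_
    rw [iteratedFDeriv_two_apply]
    have e1 : fderiv ℝ v =ᶠ[nhds y] fderiv ℝ u := (huv y hy').fderiv
    rw [← e1.fderiv_eq]
    have hd : DifferentiableAt ℝ (fderiv ℝ v) y :=
      (hv.fderiv_right (m := 1) (by norm_num)).differentiable (by simp) y
    have := (hd.hasFDerivAt.clm_apply (hasFDerivAt_const (S16.ee i) y)).fderiv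
    rw [this]
    simp [S16.ee]
  have hout : ∀ t, 0 < t → t ≤ 4 / 3 * r → ∀ y, y ∉ ball x (3 / 2 * r) → 1 ≤ ‖y - x‖ / t := by
    intro t ht htr y hy
    rw [mem_ball, dist_eq_norm, not_lt] at hy
    rw [one_le_div ht]
    linarith
  have hH : ∀ t, 0 < t → t ≤ 4 / 3 * r → Hphi φ v x t = Hphi φ u x t := by
    intro t ht htr
    unfold Hphi
    congr 2
    ext y
    by_cases hy : y ∈ ball x (3 / 2 * r)
    · rw [hnorm y hy]
    · simp [h.d0 (hout t ht htr y hy)]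
  have hD : ∀ t, 0 < t → t ≤ 4 / 3 * r → Dphi φ v x t = Dphi φ u x t := by
    intro t ht htr
    unfold Dphi
    congr 1
    ext y
    by_cases hy : y ∈ ball x (3 / 2 * r)
    · rw [hgrad y hy]
    · simp [h.h0 _ (hout t ht htr y hy)]
  have hN : ∀ t ∈ Set.Icc r (4 / 3 * r), 0 < Hphi φ v x t ∧
      t * Dphi φ v x t ≤ Λ * Hphi φ v x t := by
    intro t ht
    have tpos : 0 < t := hr.trans_le ht.1
    rw [hH t tpos ht.2, hD t tpos ht.2]
    obtain ⟨p, q⟩ := hyp t ⟨tpos, by linarith [ht.2]⟩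
    refine ⟨p, ?_⟩
    unfold Nphi at q
    exact (div_le_iff₀ p).1 q
  have hfin := S16.main_v h hv x hr hl hΛ hN rfl
  have hsubb : ball x r ⊆ ball x (3 / 2 * r) := ball_subset_ball (by linarith)
  rw [hH r hr (by linarith)] at hfin
  have s1 : ∫ y in ball x r, ‖v y‖ ^ 2 = ∫ y in ball x r, ‖u y‖ ^ 2 :=
    setIntegral_congr_fun measurableSet_ball (fun y hy => by simp only [hnorm y (hsubb hy)])
  have s2 : ∫ y in ball x r, ‖v y‖ * Real.sqrt (gradSq v y) =
      ∫ y in ball x r, ‖u y‖ * Real.sqrt (gradSq u y) :=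
    setIntegral_congr_fun measurableSet_ball
      (fun y hy => by simp only [hnorm y (hsubb hy), hgrad y (hsubb hy)])
  have s3 : ∫ y in ball x r, gradSq v y = ∫ y in ball x r, gradSq u y :=
    setIntegral_congr_fun measurableSet_ball (fun y hy => hgrad y (hsubb hy))
  rw [s1, s2, s3] at hfin
  exact hfin
end
end
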